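/- arXiv:math/0008205 — 2 statements merged into one kernel-verified Lean document; each statement's English description precedes it below -/
import Mathlib

section
/- Let X be a smooth complex hypersurface in P^{n+1} of dimension n ≥ 2 and degree d ≥ 3. Then X admits no endomorphism of degree > 1, i.e. every surjective morphism f : X → X is an isomorphism. -/
open MvPolynomial

/-- Complex projective space `ℙ^N` as the projectivization of `ℂ^{N+1}`. -/
abbrev ProjSpace (N : ℕ) := Projectivization ℂ (Fin (N + 1) → ℂ)

/-- The set of points of `ℙ^N` where the (homogeneous) polynomial `P` vanishes:
the hypersurface `X = V(P)`. -/
def hypersurface {N : ℕ} (P : MvPolynomial (Fin (N + 1)) ℂ) : Set (ProjSpace N) :=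
  {x | ∀ (v : Fin (N + 1) → ℂ) (hv : v ≠ 0), x = Projectivization.mk ℂ v hv →
    MvPolynomial.eval v P = 0}

/-- Smoothness of the hypersurface `V(P)` via the Jacobian criterion: at every nonzero
vector where `P` vanishes, some partial derivative of `P` is nonzero. -/
def IsSmoothHypersurface {N : ℕ} (P : MvPolynomial (Fin (N + 1)) ℂ) : Prop :=
  ∀ v : Fin (N + 1) → ℂ, v ≠ 0 → MvPolynomial.eval v P = 0 →
    ∃ i, MvPolynomial.eval v (MvPolynomial.pderiv i P) ≠ 0

/-- `f : X → X` is a morphism of algebraic varieties: it is given (globally) by a family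
of homogeneous polynomials of a common degree `e` with no common zero on `X`. -/
def IsAlgebraicSelfMap {N : ℕ} (P : MvPolynomial (Fin (N + 1)) ℂ)
    (f : hypersurface P → hypersurface P) : Prop :=
  ∃ (e : ℕ) (F : Fin (N + 1) → MvPolynomial (Fin (N + 1)) ℂ),
    (∀ i, (F i).IsHomogeneous e) ∧
    ∀ (v : Fin (N + 1) → ℂ) (hv : v ≠ 0) (hx : Projectivization.mk ℂ v hv ∈ hypersurface P),
      ∃ hFv : (fun i => MvPolynomial.eval v (F i)) ≠ 0,
        (f ⟨Projectivization.mk ℂ v hv, hx⟩ : ProjSpace N) =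
          Projectivization.mk ℂ (fun i => MvPolynomial.eval v (F i)) hFv

/-!
Let `f` be given on `X = V(P)` by forms `F` of degree `e`. If `e = 0` then `f` is constant, and
if `e = 1` it is linear and invertible, as `X` spans the ambient space.

Suppose `e ≥ 2`. Since `f` preserves `X`, there is a form `G` with `F^*P = G P`. In general linear
coordinates `T` for the forms `F`, the polynomial `P` and the pullbacks `Q k = F^*(∂ₖP)` for
`k ≠ i₀` form a homogeneous system of parameters. Euler's identity and the chain rule give
`∑ T k * Q k = d G P` and `∑ Q k * ∂ᵢ(T k) = ∂ᵢ(G P)`, hence modulo `P`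
`∑_{k ≠ i₀} Q k * (T i₀ * ∂ᵢ(T k) - T k * ∂ᵢ(T i₀)) ≡ G * T i₀ * ∂ᵢP`.
So `G * T i₀` multiplies the Jacobian ideal into `(P, Q)`. The Jacobian ideal contains every form
of degree greater than `(n + 2)(d - 2)`, and the quotient by `(P, Q)` has a one-dimensional socle
in its top degree, with a perfect pairing into it; comparing degrees, `G * T i₀` itself lies in
`(P, Q)`. Writing `G * T i₀ ≡ ∑ u k * Q k`, the relation
`∑ Q k * (T i₀ * ∂ᵢ(T k) - T k * ∂ᵢ(T i₀) - u k * ∂ᵢP) ≡ 0` has coefficients of degree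
`2e - 1 < e(d - 1)`, so it cannot be a nontrivial Koszul relation: all coefficients vanish modulo
`P`. Then a nonzero derivation of the coordinate ring of the affine cone over `X` kills all the
forms `T k`, although that ring is integral over the subring they generate, which is impossible
in characteristic zero.
-/

namespace SmoothHypersurface

attribute [local instance] MvPolynomial.gradedAlgebra

section Quotients

variable {A : Type*} [CommRing A] {I : Ideal A} {a b : A}

theorem mem_sup_span_singleton_iff {x : A} :
    x ∈ I ⊔ Ideal.span {a} ↔ ∃ z, x - a * z ∈ I := by
  rw [sup_comm, Ideal.mem_span_singleton_sup]
  constructor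
  · rintro ⟨z, y, hy, rfl⟩
    exact ⟨z, by simpa only [mul_comm, add_sub_cancel_left] using hy⟩
  · rintro ⟨z, hz⟩
    exact ⟨z, _, hz, by ring⟩

theorem isSMulRegular_quotient_iff :
    IsSMulRegular (A ⧸ I) a ↔ ∀ z, a * z ∈ I → z ∈ I :=
  isSMulRegular_quotient_iff_mem_of_smul_mem I a

theorem isSMulRegular_of_mem_radical (ha : IsSMulRegular (A ⧸ I) a)
    (hab : a ∈ (I ⊔ Ideal.span {b}).radical) : IsSMulRegular (A ⧸ I) b := by
  obtain ⟨t, ht⟩ := hab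
  obtain ⟨w, hw⟩ := mem_sup_span_singleton_iff.1 ht
  rw [isSMulRegular_quotient_iff] at *
  intro z hz
  refine isSMulRegular_quotient_iff.1 (IsSMulRegular.pow t (isSMulRegular_quotient_iff.2 ha)) z ?_
  rw [show a ^ t * z = (a ^ t - b * w) * z + w * (b * z) by ring]
  exact add_mem (I.mul_mem_right _ hw) (I.mul_mem_left _ hz)

theorem isSMulRegular_sup_span_swap (ha : IsSMulRegular (A ⧸ I) a)
    (hb : IsSMulRegular (A ⧸ (I ⊔ Ideal.span {a})) b) :
    IsSMulRegular (A ⧸ (I ⊔ Ideal.span {b})) a := by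
  rw [isSMulRegular_quotient_iff] at *
  intro z hz
  obtain ⟨w, hw⟩ := mem_sup_span_singleton_iff.1 hz
  obtain ⟨u, hu⟩ := mem_sup_span_singleton_iff.1 <|
    hb w (mem_sup_span_singleton_iff.2 ⟨z, by simpa only [neg_sub] using neg_mem hw⟩)
  refine mem_sup_span_singleton_iff.2 ⟨u, ha _ ?_⟩
  rw [show a * (z - b * u) = (a * z - b * w) + b * (w - a * u) by ring]
  exact add_mem hw (I.mul_mem_left _ hu)

/-- Linkage: multiplication by `b / a` identifies the ideal quotients of `I` by `a` and by `b`. -/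
theorem mem_sup_span_iff_of_mul_sub_mul_mem (ha : IsSMulRegular (A ⧸ I) a)
    (hb : IsSMulRegular (A ⧸ I) b) {y z : A} (h : b * y - a * z ∈ I) :
    y ∈ I ⊔ Ideal.span {a} ↔ z ∈ I ⊔ Ideal.span {b} := by
  rw [isSMulRegular_quotient_iff] at ha hb
  simp only [mem_sup_span_singleton_iff]
  constructor
  · rintro ⟨w, hw⟩
    refine ⟨w, ha _ ?_⟩
    rw [show a * (z - b * w) = b * (y - a * w) - (b * y - a * z) by ring]
    exact sub_mem (I.mul_mem_left _ hw) h
  · rintro ⟨w, hw⟩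
    refine ⟨w, hb _ ?_⟩
    rw [show b * (y - a * w) = a * (z - b * w) + (b * y - a * z) by ring]
    exact add_mem (I.mul_mem_left _ hw) h

end Quotients

section Homogeneous

variable {σ R : Type*} [CommRing R]

theorem homogeneousComponent_mul {a : MvPolynomial σ R} {α : ℕ} (ha : a.IsHomogeneous α)
    (p : MvPolynomial σ R) (n : ℕ) :
    homogeneousComponent n (a * p) =
      if α ≤ n then a * homogeneousComponent (n - α) p else 0 := by
  have h := DirectSum.coe_decompose_mul_of_left_mem (homogeneousSubmodule σ R) (b := p) n ha
  simpa only [← decomposition.decompose'_apply] using! h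

theorem mem_of_forall_homogeneousComponent_mem {I : Ideal (MvPolynomial σ R)}
    {p : MvPolynomial σ R} (h : ∀ n, homogeneousComponent n p ∈ I) : p ∈ I := by
  rw [← sum_homogeneousComponent p]
  exact sum_mem fun n _ => h n

theorem isHomogeneous_span {s : Set (MvPolynomial σ R)} (hs : ∀ a ∈ s, ∃ α, a.IsHomogeneous α) :
    (Ideal.span s).IsHomogeneous (homogeneousSubmodule σ R) :=
  Ideal.homogeneous_span _ _ hs

/-- In degrees `D < α` the truncated `D - α` is `0`, hence the separate clause `z = 0`. -/
theorem exists_isHomogeneous_sub_mul_mem {I : Ideal (MvPolynomial σ R)}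
    (hI : I.IsHomogeneous (homogeneousSubmodule σ R))
    {a y : MvPolynomial σ R} {α D : ℕ} (ha : a.IsHomogeneous α) (hy : y.IsHomogeneous D)
    (h : y ∈ I ⊔ Ideal.span {a}) :
    ∃ z : MvPolynomial σ R, z.IsHomogeneous (D - α) ∧ (D < α → z = 0) ∧ y - a * z ∈ I := by
  obtain ⟨z, hz⟩ := mem_sup_span_singleton_iff.1 h
  have hD := homogeneousComponent_mem_of_mem hI hz D
  rw [map_sub, homogeneousComponent_eq_self hy, homogeneousComponent_mul ha] at hD
  split_ifs at hD with hle
  · exact ⟨_, homogeneousComponent_isHomogeneous _ z, fun hlt => absurd hle hlt.not_ge, hD⟩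
  · exact ⟨0, isHomogeneous_zero _ _ _, fun _ => rfl, by simpa only [mul_zero] using hD⟩

theorem isSMulRegular_quotient_of_isHomogeneous {I : Ideal (MvPolynomial σ R)}
    (hI : I.IsHomogeneous (homogeneousSubmodule σ R))
    {g : MvPolynomial σ R} {γ : ℕ} (hg : g.IsHomogeneous γ)
    (h : ∀ D (z : MvPolynomial σ R), z.IsHomogeneous D → g * z ∈ I → z ∈ I) :
    IsSMulRegular (MvPolynomial σ R ⧸ I) g := by
  refine isSMulRegular_quotient_iff.2 fun z hz => mem_of_forall_homogeneousComponent_mem fun n =>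
    h n _ (homogeneousComponent_isHomogeneous _ _) ?_
  have hgz := homogeneousComponent_mem_of_mem hI hz (γ + n)
  rwa [homogeneousComponent_mul hg, if_pos (Nat.le_add_right _ _),
    Nat.add_sub_cancel_left] at hgz

/-- Modulo `I`, a form `z` killed by `g` is divisible by `f`, and the quotient `z / f` is again
killed by `g`; the degree drops, so `z = 0`. -/
theorem isSMulRegular_of_sup_span {I : Ideal (MvPolynomial σ R)}
    (hI : I.IsHomogeneous (homogeneousSubmodule σ R)) {f g : MvPolynomial σ R} {φ γ : ℕ}
    (hf : f.IsHomogeneous φ) (hφ : 0 < φ) (hg : g.IsHomogeneous γ)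
    (hreg : IsSMulRegular (MvPolynomial σ R ⧸ I) f)
    (hsup : IsSMulRegular (MvPolynomial σ R ⧸ (I ⊔ Ideal.span {f})) g) :
    IsSMulRegular (MvPolynomial σ R ⧸ I) g := by
  rw [isSMulRegular_quotient_iff] at hreg hsup
  refine isSMulRegular_quotient_of_isHomogeneous hI hg fun D => ?_
  induction D using Nat.strong_induction_on with | _ D ih
  intro z hzD hz
  obtain ⟨w, hwD, hw0, hw⟩ :=
    exists_isHomogeneous_sub_mul_mem hI hf hzD (hsup z (Ideal.mem_sup_left hz))
  suffices w ∈ I by simpa only [sub_add_cancel] using add_mem hw (I.mul_mem_left f this)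
  rcases lt_or_ge D φ with hlt | hle
  · exact hw0 hlt ▸ I.zero_mem
  · refine ih _ (by lia) w hwD (hreg _ ?_)
    rw [show f * (g * w) = g * z - g * (z - f * w) by ring]
    exact sub_mem hz (I.mul_mem_left _ hw)

theorem exists_isHomogeneous_coeffs {ι : Type*} [Fintype ι] {f : ι → MvPolynomial σ R}
    {deg : ι → ℕ} (hf : ∀ i, (f i).IsHomogeneous (deg i)) {y : MvPolynomial σ R} {D : ℕ}
    (hy : y.IsHomogeneous D) (h : y ∈ Ideal.span (Set.range f)) :
    ∃ u : ι → MvPolynomial σ R, (∀ i, (u i).IsHomogeneous (D - deg i)) ∧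
      (∀ i, D < deg i → u i = 0) ∧ ∑ i, u i * f i = y := by
  obtain ⟨c, rfl⟩ := Ideal.mem_span_range_iff_exists_fun.1 h
  refine ⟨fun i => if deg i ≤ D then homogeneousComponent (D - deg i) (c i) else 0,
    fun i => ?_, fun i hi => if_neg hi.not_ge, ?_⟩
  · dsimp only
    split_ifs
    exacts [homogeneousComponent_isHomogeneous _ _, isHomogeneous_zero _ _ _]
  · conv_rhs => rw [← homogeneousComponent_eq_self hy, map_sum]
    refine Finset.sum_congr rfl fun i _ => ?_
    rw [mul_comm (c i), homogeneousComponent_mul (hf i), ite_mul, zero_mul, mul_comm]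

theorem mem_span_image_sep_of_isHomogeneous {ι : Type*} {f : ι → MvPolynomial σ R}
    {deg : ι → ℕ} {J : Set ι} [Finite J] (hf : ∀ i, (f i).IsHomogeneous (deg i))
    {y : MvPolynomial σ R} {D : ℕ} (hy : y.IsHomogeneous D) (h : y ∈ Ideal.span (f '' J)) :
    y ∈ Ideal.span (f '' {j ∈ J | deg j ≤ D}) := by
  have := Fintype.ofFinite J
  rw [Set.image_eq_range] at h
  obtain ⟨u, -, hu0, rfl⟩ := exists_isHomogeneous_coeffs (fun j : J => hf j) hy h
  refine Ideal.sum_mem _ fun j _ => ?_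
  rcases le_or_gt (deg j) D with hj | hj
  · exact Ideal.mul_mem_left _ _ (Ideal.subset_span ⟨j, ⟨j.2, hj⟩, rfl⟩)
  · rw [hu0 j hj, zero_mul]
    exact Ideal.zero_mem _

theorem mem_pow_idealOfVars_of_isHomogeneous {p : MvPolynomial σ R} {D N : ℕ}
    (hp : p.IsHomogeneous D) (hND : N ≤ D) : p ∈ idealOfVars σ R ^ N :=
  (mem_pow_idealOfVars_iff N p).2 fun m hm => by
    rw [Finsupp.degree_eq_weight_one]
    exact hND.trans (hp (mem_support_iff.1 hm)).ge

theorem mem_idealOfVars_of_isHomogeneous {p : MvPolynomial σ R} {D : ℕ}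
    (hp : p.IsHomogeneous D) (hD : 0 < D) : p ∈ idealOfVars σ R := by
  simpa only [pow_one] using mem_pow_idealOfVars_of_isHomogeneous hp hD

theorem idealOfVars_le_iff {J : Ideal (MvPolynomial σ R)} :
    idealOfVars σ R ≤ J ↔ ∀ i, X i ∈ J :=
  Ideal.span_le.trans Set.range_subset_iff

theorem exists_isHomogeneous_mem_of_idealOfVars_le_radical [Finite σ]
    {J : Ideal (MvPolynomial σ R)} (hJ : idealOfVars σ R ≤ J.radical) :
    ∃ N, ∀ D, N ≤ D → ∀ p : MvPolynomial σ R, p.IsHomogeneous D → p ∈ J := by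
  obtain ⟨N, hN⟩ := Ideal.exists_pow_le_of_le_radical_of_fg hJ (idealOfVars_fg σ R)
  exact ⟨N, fun D hD p hp => hN (mem_pow_idealOfVars_of_isHomogeneous hp hD)⟩

end Homogeneous

section Parameters

/-- A family in a commutative ring that is a regular sequence in every order: each member is a
nonzerodivisor modulo any set of other members. -/
def IsPermutablyRegular {ι A : Type*} [CommRing A] (f : ι → A) : Prop :=
  ∀ (J : Set ι) (k : ι), k ∉ J → IsSMulRegular (A ⧸ Ideal.span (f '' J)) (f k)

variable {σ R : Type*} [CommRing R]

/-- A homogeneous system of parameters of a polynomial ring: a family of forms `f i` of positive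
degrees `deg i`, as many as there are variables, that generates an ideal whose radical contains
all the variables. -/
structure IsHSOP (f : σ → MvPolynomial σ R) (deg : σ → ℕ) : Prop where
  isHomogeneous : ∀ i, (f i).IsHomogeneous (deg i)
  deg_pos : ∀ i, 0 < deg i
  le_radical : idealOfVars σ R ≤ (Ideal.span (Set.range f)).radical

/-- The socle of the quotient by the homogeneous ideal `I` is concentrated in degree `s`: this is
the only degree of a nonzero class killed by all the variables. -/
def HasSocleDegree (I : Ideal (MvPolynomial σ R)) (s : ℕ) : Prop :=
  ∀ (D : ℕ) (y : MvPolynomial σ R), y.IsHomogeneous D → (∀ i, X i * y ∈ I) → y ∉ I → D = s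

theorem span_image_insert {ι A : Type*} [CommRing A] (f : ι → A) (J : Set ι) (k : ι) :
    Ideal.span (f '' insert k J) = Ideal.span (f '' J) ⊔ Ideal.span {f k} := by
  rw [Set.image_insert_eq, Ideal.span_insert, sup_comm]

theorem span_range_eq_sup {ι A : Type*} [CommRing A] (f : ι → A) (k : ι) :
    Ideal.span (Set.range f) = Ideal.span (f '' {k}ᶜ) ⊔ Ideal.span {f k} := by
  rw [← span_image_insert, ← Set.image_univ]
  congr 2
  ext x
  simp [em]

section

variable {ι A : Type*} [DecidableEq ι] (f : ι → A) {J : Set ι} {k : ι}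

theorem image_update_of_notMem (hk : k ∉ J) (g : A) : Function.update f k g '' J = f '' J :=
  Set.image_congr fun _ hi => Function.update_of_ne (ne_of_mem_of_not_mem hi hk) _ _

variable [CommRing A]

theorem span_range_update (k : ι) (g : A) :
    Ideal.span (Set.range (Function.update f k g)) =
      Ideal.span (f '' {k}ᶜ) ⊔ Ideal.span {g} := by
  rw [span_range_eq_sup _ k, image_update_of_notMem f (by simp), Function.update_self]

theorem span_image_update_of_mem (hk : k ∈ J) (g : A) :
    Ideal.span (Function.update f k g '' J) =
      Ideal.span (f '' (J \ {k})) ⊔ Ideal.span {g} := by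
  rw [← Set.insert_sdiff_self_of_mem hk, span_image_insert,
    image_update_of_notMem f (fun h => h.2 rfl), Function.update_self,
    Set.insert_sdiff_self_of_mem hk]

end

namespace IsHSOP

variable {f : σ → MvPolynomial σ R} {deg : σ → ℕ}

theorem isHomogeneous_span_image (hf : IsHSOP f deg) (J : Set σ) :
    (Ideal.span (f '' J)).IsHomogeneous (homogeneousSubmodule σ R) :=
  isHomogeneous_span (Set.forall_mem_image.2 fun i _ => ⟨_, hf.isHomogeneous i⟩)

theorem mem_radical (hf : IsHSOP f deg) {p : MvPolynomial σ R} {α : ℕ} (hp : p.IsHomogeneous α)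
    (hα : 0 < α) : p ∈ (Ideal.span (Set.range f)).radical :=
  hf.le_radical (mem_idealOfVars_of_isHomogeneous hp hα)

variable [DecidableEq σ] {k : σ} {g : MvPolynomial σ R} {γ : ℕ}

theorem isSMulRegular_of_update [Finite σ] (hf : IsHSOP f deg) (hreg : IsPermutablyRegular f)
    (hg : IsHSOP (Function.update f k g) (Function.update deg k γ)) {J : Set σ} (hk : k ∉ J) :
    IsSMulRegular (MvPolynomial σ R ⧸ Ideal.span (f '' J)) g := by
  induction J using WellFoundedGT.induction with | ind J ih
  by_cases hJ : J = {k}ᶜ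
  · have hfk := hg.mem_radical (hf.isHomogeneous k) (hf.deg_pos k)
    rw [span_range_update, ← hJ] at hfk
    exact isSMulRegular_of_mem_radical (hreg J k hk) hfk
  · obtain ⟨j, hjk, hjJ⟩ : ∃ j, j ≠ k ∧ j ∉ J :=
      Set.not_subset.1 fun h => hJ (Set.Subset.antisymm (Set.subset_compl_singleton_iff.2 hk) h)
    have hins := ih (insert j J) (Set.ssubset_insert hjJ) (by simp [hk, hjk.symm])
    rw [span_image_insert] at hins
    exact isSMulRegular_of_sup_span (hf.isHomogeneous_span_image J) (hf.isHomogeneous j)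
      (hf.deg_pos j) (by simpa using hg.isHomogeneous k) (hreg J j hjJ) hins

theorem isPermutablyRegular_update [Finite σ] (hf : IsHSOP f deg) (hreg : IsPermutablyRegular f)
    (hg : IsHSOP (Function.update f k g) (Function.update deg k γ)) :
    IsPermutablyRegular (Function.update f k g) := by
  intro J j hj
  rcases eq_or_ne j k with rfl | hjk
  · rw [image_update_of_notMem f hj, Function.update_self]
    exact hf.isSMulRegular_of_update hreg hg hj
  rw [Function.update_of_ne hjk]
  by_cases hkJ : k ∈ J
  · rw [span_image_update_of_mem f hkJ]
    refine isSMulRegular_sup_span_swap (hreg _ j fun h => hj h.1) ?_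
    rw [← span_image_insert]
    exact hf.isSMulRegular_of_update hreg hg (by simp [hjk.symm])
  · rw [image_update_of_notMem f hkJ]
    exact hreg J j hj

theorem hasSocleDegree_of_update (hf : IsHSOP f deg) (hreg : IsPermutablyRegular f)
    (hg : IsHSOP (Function.update f k g) (Function.update deg k γ))
    (hreg' : IsPermutablyRegular (Function.update f k g)) {s t : ℕ}
    (hs : HasSocleDegree (Ideal.span (Set.range (Function.update f k g))) s)
    (hst : s + deg k = t + γ) : HasSocleDegree (Ideal.span (Set.range f)) t := by
  have hgγ : g.IsHomogeneous γ := by simpa using hg.isHomogeneous k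
  have hγ : 0 < γ := by simpa using hg.deg_pos k
  have hregf := hreg {k}ᶜ k (by simp)
  have hregg := hreg' {k}ᶜ k (by simp)
  rw [image_update_of_notMem f (by simp), Function.update_self] at hregg
  intro D y hy hXy hyn
  rw [span_range_eq_sup f k] at hXy hyn
  have hgy : g * y ∈ Ideal.span (f '' {k}ᶜ) ⊔ Ideal.span {f k} := by
    have hle : idealOfVars σ R ≤ (Ideal.span (f '' {k}ᶜ) ⊔ Ideal.span {f k}).colon {y} :=
      idealOfVars_le_iff.2 fun i => Submodule.mem_colon_singleton.2 (hXy i)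
    exact Submodule.mem_colon_singleton.1 (hle (mem_idealOfVars_of_isHomogeneous hgγ hγ))
  obtain ⟨z, hz, hz0, hsub⟩ := exists_isHomogeneous_sub_mul_mem
    (hf.isHomogeneous_span_image {k}ᶜ) (hf.isHomogeneous k) (hgγ.mul hy) hgy
  have hzn : z ∉ Ideal.span (f '' {k}ᶜ) ⊔ Ideal.span {g} :=
    mt (mem_sup_span_iff_of_mul_sub_mul_mem hregf hregg hsub).2 hyn
  have hle : deg k ≤ γ + D := by
    by_contra! hlt
    exact hzn (hz0 hlt ▸ zero_mem _)
  rw [span_range_update] at hs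
  have hdeg : γ + D - deg k = s := by
    refine hs _ z hz (fun i => ?_) hzn
    refine (mem_sup_span_iff_of_mul_sub_mul_mem (y := X i * y) hregf hregg ?_).1 (hXy i)
    rw [show g * (X i * y) - f k * (X i * z) = X i * (g * y - f k * z) by ring]
    exact Ideal.mul_mem_left _ _ hsub
  lia

end IsHSOP

end Parameters

section Exchange

theorem eq_of_lt_of_le_of_mem_minimalPrimes {A : Type*} [CommRing A] [IsNoetherianRing A]
    {p q m : Ideal A} {x : A} [hp : p.IsPrime] [hq : q.IsPrime]
    (hm : m ∈ (p ⊔ Ideal.span {x}).minimalPrimes) (hpq : p < q) (hqm : q ≤ m) : q = m := by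
  have hmPrime : m.IsPrime := hm.1.1
  have map_lt {a b : Ideal A} (ha : p ≤ a) (hab : a < b) :
      a.map (Ideal.Quotient.mk p) < b.map (Ideal.Quotient.mk p) :=
    (Ideal.map_mono hab.le).lt_of_ne fun h => hab.ne <| by
      rw [← Ideal.comap_map_mk ha, h, Ideal.comap_map_mk (ha.trans hab.le)]
  have map_isPrime {a : Ideal A} [a.IsPrime] (ha : p ≤ a) :
      (a.map (Ideal.Quotient.mk p)).IsPrime :=
    Ideal.map_isPrime_of_surjective Ideal.Quotient.mk_surjective (by rwa [Ideal.mk_ker])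
  have := map_isPrime le_rfl
  have := map_isPrime hpq.le
  have := map_isPrime (hpq.le.trans hqm)
  by_contra hne
  have hchain : (1 : ℕ∞) + 1 ≤ 1 := calc
    (1 : ℕ∞) + 1 ≤ (p.map (Ideal.Quotient.mk p)).height + 1 + 1 := by gcongr; exact le_add_self
    _ ≤ (q.map (Ideal.Quotient.mk p)).height + 1 := by
      gcongr; exact Ideal.height_add_one_le_of_lt_of_isPrime (map_lt le_rfl hpq)
    _ ≤ (m.map (Ideal.Quotient.mk p)).height :=
      Ideal.height_add_one_le_of_lt_of_isPrime (map_lt hpq.le (hqm.lt_of_ne hne))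
    _ ≤ 1 := Ideal.map_height_le_one_of_mem_minimalPrimes hm
  exact absurd hchain (by decide)

theorem isHomogeneous_of_mem_minimalPrimes {A S ι : Type*} [CommRing A] [AddCommMonoid ι]
    [LinearOrder ι] [IsOrderedCancelAddMonoid ι] [SetLike S A] [AddSubmonoidClass S A]
    {𝒜 : ι → S} [GradedRing 𝒜] {I q : Ideal A} (hI : I.IsHomogeneous 𝒜)
    (hq : q ∈ I.minimalPrimes) : q.IsHomogeneous 𝒜 := by
  have hle : I ≤ (q.homogeneousCore 𝒜).toIdeal :=
    hI.toIdeal_homogeneousCore_eq_self.symm.trans_le (Ideal.homogeneousCore_mono 𝒜 hq.1.2)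
  have heq : (q.homogeneousCore 𝒜).toIdeal = q :=
    (q.toIdeal_homogeneousCore_le 𝒜).antisymm
      (hq.2 ⟨hq.1.1.homogeneousCore, hle⟩ (q.toIdeal_homogeneousCore_le 𝒜))
  exact heq ▸ (q.homogeneousCore 𝒜).isHomogeneous

theorem exists_sum_smul_notMem {K A ι : Type*} [Field K] [Infinite K] [CommRing A] [Algebra K A]
    [Fintype ι] {S : Set (Ideal A)} (hS : S.Finite) (g : ι → A)
    (hg : ∀ q ∈ S, ∃ i, g i ∉ q) : ∃ v : ι → K, ∀ q ∈ S, ∑ i, v i • g i ∉ q := by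
  classical
  have : Finite S := hS
  obtain ⟨v, hv⟩ := Submodule.exists_forall_notMem_of_forall_ne_top
    (fun q : S => (q.1.restrictScalars K).comap (Fintype.linearCombination K g)) fun q hq => by
      obtain ⟨i, hi⟩ := hg q q.2
      have : Pi.single i 1 ∈ (q.1.restrictScalars K).comap (Fintype.linearCombination K g) :=
        hq ▸ Submodule.mem_top
      exact hi (by simpa [Fintype.linearCombination_apply_single] using this)
  exact ⟨v, fun q hq h => hv ⟨q, hq⟩ (by simpa [Fintype.linearCombination_apply] using h)⟩

variable {σ K : Type*} [Field K]

theorem idealOfVars_eq_ker_constantCoeff :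
    idealOfVars σ K = RingHom.ker (constantCoeff : MvPolynomial σ K →+* K) := by
  ext p
  rw [← pow_one (idealOfVars σ K), mem_pow_idealOfVars_iff', RingHom.mem_ker,
    constantCoeff_eq]
  simp [Finsupp.degree_eq_zero_iff]

instance isPrime_idealOfVars : (idealOfVars σ K).IsPrime := by
  rw [idealOfVars_eq_ker_constantCoeff]
  exact RingHom.ker_isPrime _

theorem le_idealOfVars_of_isHomogeneous {I : Ideal (MvPolynomial σ K)}
    (hI : I.IsHomogeneous (homogeneousSubmodule σ K)) (hne : I ≠ ⊤) : I ≤ idealOfVars σ K := by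
  intro p hp
  rw [idealOfVars_eq_ker_constantCoeff, RingHom.mem_ker]
  by_contra h
  refine hne (Ideal.eq_top_of_isUnit_mem _ (homogeneousComponent_mem_of_mem hI hp 0) ?_)
  rw [homogeneousComponent_zero]
  exact (isUnit_iff_ne_zero.2 h).map C

/-- A curve `V(I)` meeting the hypersurface `x = 0` only at the origin meets `l = 0` only at the
origin as soon as `l` vanishes on none of its components. -/
theorem idealOfVars_le_radical_sup_span [Finite σ] {I : Ideal (MvPolynomial σ K)}
    (hI : I.IsHomogeneous (homogeneousSubmodule σ K)) {x l : MvPolynomial σ K} {α γ : ℕ}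
    (hx : x.IsHomogeneous α) (hα : 0 < α) (hxI : idealOfVars σ K ≤ (I ⊔ Ideal.span {x}).radical)
    (hl : l.IsHomogeneous γ)
    (hlp : ∀ p ∈ I.minimalPrimes, ¬ idealOfVars σ K ≤ p → l ∉ p) :
    idealOfVars σ K ≤ (I ⊔ Ideal.span {l}).radical := by
  rw [← Ideal.sInf_minimalPrimes]
  refine le_sInf fun q hq => ?_
  have hqPrime : q.IsPrime := hq.1.1
  have hIl : (I ⊔ Ideal.span {l}).IsHomogeneous (homogeneousSubmodule σ K) :=
    hI.sup (isHomogeneous_span (by simpa using ⟨γ, hl⟩))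
  have hqm : q ≤ idealOfVars σ K :=
    le_idealOfVars_of_isHomogeneous (isHomogeneous_of_mem_minimalPrimes hIl hq) hqPrime.ne_top
  obtain ⟨hIq, hlq⟩ := sup_le_iff.1 hq.1.2
  obtain ⟨p, hp, hpq⟩ := Ideal.exists_minimalPrimes_le hIq
  have hpPrime : p.IsPrime := hp.1.1
  by_cases hmp : idealOfVars σ K ≤ p
  · exact hmp.trans hpq
  have hlt : p < q := hpq.lt_of_ne fun h =>
    hlp p hp hmp (h ▸ (Ideal.span_singleton_le_iff_mem _).1 hlq)
  refine (eq_of_lt_of_le_of_mem_minimalPrimes (x := x) ⟨⟨isPrime_idealOfVars, ?_⟩, ?_⟩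
    hlt hqm).ge
  · exact sup_le (hpq.trans hqm) <|
      (Ideal.span_singleton_le_iff_mem _).2 (mem_idealOfVars_of_isHomogeneous hx hα)
  · rintro r ⟨hr, hpr⟩ -
    exact hxI.trans (hr.radical_le_iff.2 ((sup_le_sup_right hp.1.2 _).trans hpr))

theorem isHomogeneous_sum_smul {ι : Type*} [Fintype ι] {g : ι → MvPolynomial σ K} {γ : ℕ}
    (hg : ∀ i, (g i).IsHomogeneous γ) (v : ι → K) : (∑ i, v i • g i).IsHomogeneous γ :=
  (homogeneousSubmodule σ K γ).sum_mem fun i _ => Submodule.smul_mem _ _ (hg i)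

theorem IsHSOP.exists_update [Infinite K] [Finite σ] [DecidableEq σ] {ι : Type*} [Fintype ι]
    {f : σ → MvPolynomial σ K} {deg : σ → ℕ} (hf : IsHSOP f deg) (k : σ)
    (g : ι → MvPolynomial σ K) {γ : ℕ} (hg : ∀ i, (g i).IsHomogeneous γ) (hγ : 0 < γ)
    (hprime : ∀ q : Ideal (MvPolynomial σ K), q.IsPrime → (∀ j, j ≠ k → f j ∈ q) →
      (∀ i, g i ∈ q) → idealOfVars σ K ≤ q) :
    ∃ v : ι → K, IsHSOP (Function.update f k (∑ i, v i • g i)) (Function.update deg k γ) := by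
  obtain ⟨v, hv⟩ := exists_sum_smul_notMem (K := K)
    (S := {q ∈ (Ideal.span (f '' {k}ᶜ)).minimalPrimes | ¬ idealOfVars σ K ≤ q})
    ((Ideal.finite_minimalPrimes_of_isNoetherianRing _ _).subset (Set.sep_subset _ _)) g
    fun q hq => by
      by_contra! h
      exact hq.2 <| hprime q hq.1.1.1
        (fun j hj => hq.1.1.2 (Ideal.subset_span (Set.mem_image_of_mem f hj))) h
  have hl := isHomogeneous_sum_smul hg v
  refine ⟨v, fun i => ?_, fun i => ?_, ?_⟩
  · rcases eq_or_ne i k with rfl | hi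
    · simpa only [Function.update_self] using hl
    · simpa only [Function.update_of_ne hi] using hf.isHomogeneous i
  · rcases eq_or_ne i k with rfl | hi
    · simpa only [Function.update_self] using hγ
    · simpa only [Function.update_of_ne hi] using hf.deg_pos i
  · rw [span_range_update]
    exact idealOfVars_le_radical_sup_span (hf.isHomogeneous_span_image _) (hf.isHomogeneous k)
      (hf.deg_pos k) (span_range_eq_sup f k ▸ hf.le_radical) hl fun p hp hpm => hv p ⟨hp, hpm⟩

end Exchange

section Macaulay

theorem IsPermutablyRegular.map {ι A B : Type*} [CommRing A] [CommRing B] {f : ι → A}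
    (hf : IsPermutablyRegular f) (e : A ≃+* B) : IsPermutablyRegular fun i => e (f i) := by
  intro J k hk
  have hspan : Ideal.span ((fun i => e (f i)) '' J) = (Ideal.span (f '' J)).map e := by
    rw [Ideal.map_span, Set.image_image]
  refine isSMulRegular_quotient_iff.2 (e.surjective.forall.2 fun z hz => ?_)
  rw [hspan, ← map_mul, Ideal.mem_map_of_equiv] at hz
  obtain ⟨w, hw, hwz⟩ := hz
  rw [hspan]
  exact Ideal.mem_map_of_mem e <|
    isSMulRegular_quotient_iff.1 (hf J k hk) z (e.injective hwz ▸ hw)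

variable {σ K : Type*} [Field K]

theorem isPermutablyRegular_X : IsPermutablyRegular (X : σ → MvPolynomial σ K) := by
  refine fun J k hk => isSMulRegular_quotient_iff.2 fun z hz => ?_
  rw [mem_ideal_span_X_image] at hz ⊢
  intro m hm
  obtain ⟨i, hi, hne⟩ := hz (Finsupp.single k 1 + m) (by
    rwa [mem_support_iff, coeff_X_mul, ← mem_support_iff])
  refine ⟨i, hi, ?_⟩
  simpa [Finsupp.single_apply, (ne_of_mem_of_not_mem hi hk).symm] using hne

theorem IsHSOP.eq_zero_of_eval {f : σ → MvPolynomial σ K} {deg : σ → ℕ} (hf : IsHSOP f deg)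
    {v : σ → K} (hv : ∀ i, eval v (f i) = 0) : v = 0 := by
  have hle : (Ideal.span (Set.range f)).radical ≤ RingHom.ker (eval v) :=
    (RingHom.ker_isPrime (eval v)).radical_le_iff.2
      (Ideal.span_le.2 (Set.range_subset_iff.2 hv))
  funext i
  simpa using idealOfVars_le_iff.1 (hf.le_radical.trans hle) i

section

variable {R : Type*} [CommRing R] {I : Ideal (MvPolynomial σ R)} {s : ℕ}

theorem HasSocleDegree.mem_of_lt [Finite σ] (hs : HasSocleDegree I s)
    (hI : idealOfVars σ R ≤ I.radical) {D : ℕ} {z : MvPolynomial σ R} (hz : z.IsHomogeneous D)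
    (hD : s < D) : z ∈ I := by
  obtain ⟨N, hN⟩ := exists_isHomogeneous_mem_of_idealOfVars_le_radical hI
  suffices H : ∀ y : MvPolynomial σ R, y.IsHomogeneous D → y ∈ I from H z hz
  refine Nat.decreasingInduction'
    (P := fun E => ∀ y : MvPolynomial σ R, y.IsHomogeneous E → y ∈ I)
    (fun E _ hE ih y hy => ?_) (le_max_left D N) (hN _ (le_max_right D N))
  by_contra hyI
  have := hs E y hy (fun i => ih _ (add_comm 1 E ▸ (isHomogeneous_X R i).mul hy)) hyI
  lia

theorem HasSocleDegree.mem_of_forall_mul_mem (hs : HasSocleDegree I s) (k : ℕ) :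
    ∀ {D : ℕ} {y : MvPolynomial σ R}, y.IsHomogeneous D → D + k ≤ s →
      (∀ z : MvPolynomial σ R, z.IsHomogeneous k → z * y ∈ I) → y ∈ I := by
  induction k with
  | zero =>
    intro D y _ _ h
    simpa only [one_mul] using h 1 (isHomogeneous_one σ R)
  | succ k ih =>
    intro D y hy hD h
    by_contra hyI
    have := hs D y hy (fun i => ih ((isHomogeneous_X R i).mul hy) (by lia) fun z hz => ?_) hyI
    · lia
    · rw [← mul_assoc]
      exact h _ (hz.mul (isHomogeneous_X R i))

end

section

variable [Fintype σ]

theorem exists_eq_toMvPolynomial {ι : Type*} {f : ι → MvPolynomial σ K}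
    (hf : ∀ i, (f i).IsHomogeneous 1) : ∃ M : Matrix ι σ K, f = M.toMvPolynomial := by
  have hlin : ∀ i, ∃ c : σ → K, ∑ j, c j • (X j : MvPolynomial σ K) = f i := fun i => by
    rw [← Submodule.mem_span_range_iff_exists_fun, ← homogeneousSubmodule_one_eq_span_X]
    exact hf i
  choose M hM using hlin
  refine ⟨Matrix.of M, funext fun i => ?_⟩
  simp only [← hM i, Matrix.toMvPolynomial, Matrix.of_apply, X, smul_monomial, smul_eq_mul,
    mul_one]

variable [DecidableEq σ]

/-- The linear change of coordinates of the polynomial ring given by an invertible matrix. -/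
noncomputable def linearChange {R : Type*} [CommRing R] (M : Matrix σ σ R) (hM : IsUnit M.det) :
    MvPolynomial σ R ≃ₐ[R] MvPolynomial σ R :=
  AlgEquiv.ofAlgHom (bind₁ M.toMvPolynomial) (bind₁ M⁻¹.toMvPolynomial)
    (by ext1 i; simp [← Matrix.toMvPolynomial_mul, Matrix.nonsing_inv_mul M hM])
    (by ext1 i; simp [← Matrix.toMvPolynomial_mul, Matrix.mul_nonsing_inv M hM])

theorem IsHSOP.exists_linearChange_X {f : σ → MvPolynomial σ K} {deg : σ → ℕ} (hf : IsHSOP f deg)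
    (hdeg : ∀ i, deg i = 1) :
    ∃ (M : Matrix σ σ K) (hM : IsUnit M.det), f = fun i => linearChange M hM (X i) := by
  obtain ⟨M, rfl⟩ := exists_eq_toMvPolynomial fun i => hdeg i ▸ hf.isHomogeneous i
  refine ⟨M, isUnit_iff_ne_zero.2 fun h0 => ?_, funext fun i => (bind₁_X_right _ i).symm⟩
  obtain ⟨v, hv, hMv⟩ := Matrix.exists_mulVec_eq_zero_iff.2 h0
  refine hv (hf.eq_zero_of_eval fun i => ?_)
  rw [Matrix.toMvPolynomial_eval_eq_apply, hMv, Pi.zero_apply]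

end

theorem IsHSOP.isPermutablyRegular_of_linear [Finite σ] {f : σ → MvPolynomial σ K} {deg : σ → ℕ}
    (hf : IsHSOP f deg) (hdeg : ∀ i, deg i = 1) : IsPermutablyRegular f := by
  classical
  cases nonempty_fintype σ
  obtain ⟨M, hM, rfl⟩ := hf.exists_linearChange_X hdeg
  exact isPermutablyRegular_X.map (linearChange M hM).toRingEquiv

theorem IsHSOP.hasSocleDegree_of_linear [Finite σ] {f : σ → MvPolynomial σ K} {deg : σ → ℕ}
    (hf : IsHSOP f deg) (hdeg : ∀ i, deg i = 1) :
    HasSocleDegree (Ideal.span (Set.range f)) 0 := by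
  classical
  cases nonempty_fintype σ
  obtain ⟨M, hM, rfl⟩ := hf.exists_linearChange_X hdeg
  intro D y hy _ hyn
  by_contra hD
  have hle : idealOfVars σ K ≤
      Ideal.span (Set.range fun i => linearChange M hM (X i)) := by
    refine idealOfVars_le_iff.2 fun i => ?_
    have hmem : (linearChange M hM).symm (X i) ∈ idealOfVars σ K := by
      refine mem_idealOfVars_of_isHomogeneous (D := 1) ?_ one_pos
      simpa [linearChange] using M⁻¹.toMvPolynomial_isHomogeneous i
    have := Ideal.mem_map_of_mem (linearChange M hM) hmem
    rwa [AlgEquiv.apply_symm_apply, idealOfVars, Ideal.map_span, ← Set.range_comp] at this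
  exact hyn (hle (mem_idealOfVars_of_isHomogeneous hy (Nat.pos_of_ne_zero hD)))

variable [Infinite K]

/-- By exchanging the members one at a time for general linear forms, every homogeneous system of
parameters is connected to one consisting of linear forms. -/
theorem IsHSOP.isPermutablyRegular_and_hasSocleDegree [Fintype σ] {f : σ → MvPolynomial σ K}
    {deg : σ → ℕ} (hf : IsHSOP f deg) :
    IsPermutablyRegular f ∧ HasSocleDegree (Ideal.span (Set.range f)) (∑ i, (deg i - 1)) := by
  classical
  suffices H : ∀ (S : Finset σ) (f : σ → MvPolynomial σ K) (deg : σ → ℕ), IsHSOP f deg →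
      (∀ i ∉ S, deg i = 1) → IsPermutablyRegular f ∧
        HasSocleDegree (Ideal.span (Set.range f)) (∑ i, (deg i - 1)) from
    H Finset.univ f deg hf fun i hi => absurd (Finset.mem_univ i) hi
  intro S
  induction S using Finset.induction_on with
  | empty =>
    intro f deg hf hdeg
    have hdeg : ∀ i, deg i = 1 := fun i => hdeg i (Finset.notMem_empty i)
    refine ⟨hf.isPermutablyRegular_of_linear hdeg, ?_⟩
    simpa only [hdeg, Nat.sub_self, Finset.sum_const_zero] using hf.hasSocleDegree_of_linear hdeg
  | insert k S _ ih =>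
    intro f deg hf hdeg
    obtain ⟨v, hv⟩ := hf.exists_update k X (isHomogeneous_X K) one_pos
      fun q _ _ hX => idealOfVars_le_iff.2 hX
    obtain ⟨hreg', hsoc'⟩ := ih _ _ hv fun i hi => by
      rcases eq_or_ne i k with rfl | hik
      · rw [Function.update_self]
      · rw [Function.update_of_ne hik, hdeg i (by simp [hik, hi])]
    have hreg : IsPermutablyRegular f := by
      simpa only [Function.update_idem, Function.update_eq_self] using
        hv.isPermutablyRegular_update (k := k) (g := f k) (γ := deg k) hreg' (by simpa using hf)
    refine ⟨hreg, hf.hasSocleDegree_of_update hreg hv hreg' hsoc' ?_⟩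
    rw [← Finset.add_sum_erase _ _ (Finset.mem_univ k),
      ← Finset.add_sum_erase _ (fun i => deg i - 1) (Finset.mem_univ k), Function.update_self,
      Finset.sum_congr rfl fun i hi => by rw [Function.update_of_ne (Finset.ne_of_mem_erase hi)]]
    have := hf.deg_pos k
    lia

theorem IsHSOP.isPermutablyRegular [Finite σ] {f : σ → MvPolynomial σ K} {deg : σ → ℕ}
    (hf : IsHSOP f deg) : IsPermutablyRegular f := by
  cases nonempty_fintype σ
  exact hf.isPermutablyRegular_and_hasSocleDegree.1

theorem IsHSOP.hasSocleDegree [Fintype σ] {f : σ → MvPolynomial σ K} {deg : σ → ℕ}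
    (hf : IsHSOP f deg) :
    HasSocleDegree (Ideal.span (Set.range f)) (∑ i, (deg i - 1)) :=
  hf.isPermutablyRegular_and_hasSocleDegree.2

end Macaulay

section Nullstellensatz

variable {σ K : Type*} [Field K] [IsAlgClosed K] [Finite σ]

theorem mem_radical_span_of_eval {s : Set (MvPolynomial σ K)} {p : MvPolynomial σ K}
    (h : ∀ v, (∀ q ∈ s, eval v q = 0) → eval v p = 0) : p ∈ (Ideal.span s).radical := by
  rw [← vanishingIdeal_zeroLocus_eq_radical (K := K), zeroLocus_span]
  exact h

theorem idealOfVars_le_radical_span_of_eval {s : Set (MvPolynomial σ K)}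
    (h : ∀ v, (∀ q ∈ s, eval v q = 0) → v = 0) : idealOfVars σ K ≤ (Ideal.span s).radical :=
  idealOfVars_le_iff.2 fun i => mem_radical_span_of_eval fun v hv => by simp [h v hv]

theorem isHSOP_of_eval {f : σ → MvPolynomial σ K} {deg : σ → ℕ}
    (hf : ∀ i, (f i).IsHomogeneous (deg i)) (hdeg : ∀ i, 0 < deg i)
    (h : ∀ v, (∀ i, eval v (f i) = 0) → v = 0) : IsHSOP f deg :=
  ⟨hf, hdeg, idealOfVars_le_radical_span_of_eval (by simpa only [Set.forall_mem_range] using h)⟩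

theorem isHSOP_update_of_eval [DecidableEq σ] {f : σ → MvPolynomial σ K} {P : MvPolynomial σ K}
    {i₀ : σ} {d γ : ℕ} (hP : P.IsHomogeneous d) (hd : 0 < d) (hf : ∀ i, (f i).IsHomogeneous γ)
    (hγ : 0 < γ) (h : ∀ v, eval v P = 0 → (∀ i ≠ i₀, eval v (f i) = 0) → v = 0) :
    IsHSOP (Function.update f i₀ P) (Function.update (fun _ => γ) i₀ d) := by
  refine isHSOP_of_eval (fun i => ?_) ((Function.forall_update_iff _ fun _ n => 0 < n).2
    ⟨hd, fun _ _ => hγ⟩) fun v hv => ?_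
  · obtain rfl | hi := eq_or_ne i i₀
    · rwa [Function.update_self, Function.update_self]
    · rw [Function.update_of_ne hi, Function.update_of_ne hi]
      exact hf i
  · obtain ⟨hvP, hvf⟩ := (Function.forall_update_iff f fun _ p => eval v p = 0).1 hv
    exact h v hvP hvf

theorem mem_span_singleton_of_eval {P q : MvPolynomial σ K} (hP : Prime P)
    (h : ∀ v, eval v P = 0 → eval v q = 0) : q ∈ Ideal.span {P} := by
  rw [← ((Ideal.span_singleton_prime hP.ne_zero).2 hP).radical]
  exact mem_radical_span_of_eval (by simpa only [Set.mem_singleton_iff, forall_eq] using h)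

end Nullstellensatz

section Irreducible

variable {σ K : Type*} [Field K]

theorem isHomogeneous_totalDegree_of_mul {R : Type*} [CommRing R] [IsDomain R]
    {A B : MvPolynomial σ R} {d : ℕ} (h : (A * B).IsHomogeneous d) (h0 : A * B ≠ 0) :
    A.IsHomogeneous A.totalDegree := by
  have order_le {p : MvPolynomial σ R} (hp : p ≠ 0) :
      (p : MvPowerSeries σ R).order ≤ p.totalDegree := by
    obtain ⟨m, hm⟩ := support_nonempty.2 hp
    refine (MvPowerSeries.order_le (d := m) (by simpa using hm)).trans ?_
    exact_mod_cast le_totalDegree hm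
  have hA := left_ne_zero_of_mul h0
  have hB := right_ne_zero_of_mul h0
  have hd : (d : ℕ∞) ≤ (A : MvPowerSeries σ R).order + (B : MvPowerSeries σ R).order := by
    rw [← MvPowerSeries.order_mul, ← coe_mul]
    exact MvPowerSeries.nat_le_order fun m hm => (coeff_coe _ m).trans (h.coeff_eq_zero hm.ne)
  rw [← h.totalDegree h0, totalDegree_mul_of_isDomain hA hB, Nat.cast_add] at hd
  have hAord : (A.totalDegree : ℕ∞) ≤ (A : MvPowerSeries σ R).order :=
    (ENat.add_le_add_iff_right (ENat.natCast_ne_top B.totalDegree)).1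
      (hd.trans (add_le_add_right (order_le hB) _))
  intro m hm
  change Finsupp.weight (fun _ => 1) m = _
  rw [← Finsupp.degree_eq_weight_one]
  refine (le_totalDegree (mem_support_iff.2 hm)).antisymm ?_
  exact_mod_cast hAord.trans (MvPowerSeries.order_le (d := m) (by simpa using hm))

theorem notMem_span_singleton_of_isHomogeneous {P p : MvPolynomial σ K} {d m : ℕ}
    (hP : P.IsHomogeneous d) (hp : p.IsHomogeneous m) (hp0 : p ≠ 0) (hmd : m < d) :
    p ∉ Ideal.span {P} := fun h => by
  have hPp := Ideal.mem_span_singleton.1 h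
  have hdeg := totalDegree_le_of_dvd_of_isDomain hPp hp0
  rw [hP.totalDegree (ne_zero_of_dvd_ne_zero hp0 hPp), hp.totalDegree hp0] at hdeg
  exact hmd.not_ge hdeg

theorem isUnit_of_totalDegree_eq_zero {A : MvPolynomial σ K} (h : A.totalDegree = 0)
    (h0 : A ≠ 0) : IsUnit A := by
  rw [totalDegree_eq_zero_iff_eq_C.1 h] at h0 ⊢
  exact (isUnit_iff_ne_zero.2 fun hc => h0 (by rw [hc, C_0])).map C

theorem not_isUnit_of_isHomogeneous {A : MvPolynomial σ K} {α : ℕ} (h : A.IsHomogeneous α)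
    (hα : 0 < α) : ¬ IsUnit A := fun hA =>
  isPrime_idealOfVars.ne_top
    (Ideal.eq_top_of_isUnit_mem _ (mem_idealOfVars_of_isHomogeneous h hα) hA)

theorem IsHSOP.notMem_span [Infinite K] [Finite σ] {f : σ → MvPolynomial σ K} {deg : σ → ℕ}
    (hf : IsHSOP f deg) {J : Set σ} {k : σ} (hk : k ∉ J) : f k ∉ Ideal.span (f '' J) := by
  classical
  intro h
  have hone : 1 ∈ Ideal.span (f '' J) :=
    isSMulRegular_quotient_iff.1 (hf.isPermutablyRegular J k hk) 1 (by rwa [mul_one])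
  refine isPrime_idealOfVars.ne_top ((Ideal.eq_top_iff_one _).2 (Ideal.span_le.2 ?_ hone))
  rintro _ ⟨i, -, rfl⟩
  exact mem_idealOfVars_of_isHomogeneous (hf.isHomogeneous i) (hf.deg_pos i)

variable [IsAlgClosed K]

theorem exists_ne_zero_forall_eval_eq_zero [Fintype σ] {ι : Type*} [Fintype ι]
    (hι : Fintype.card ι < Fintype.card σ) {f : ι → MvPolynomial σ K} {deg : ι → ℕ}
    (hf : ∀ i, (f i).IsHomogeneous (deg i)) (hdeg : ∀ i, 0 < deg i) :
    ∃ v : σ → K, v ≠ 0 ∧ ∀ i, eval v (f i) = 0 := by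
  have := IsAlgClosed.instInfinite (K := K)
  by_contra! hcon
  obtain ⟨g⟩ := Function.Embedding.nonempty_of_card_le hι.le
  obtain ⟨k, hk⟩ : ∃ k, ¬ ∃ i, g i = k := by
    by_contra! hg
    exact hι.not_ge (Fintype.card_le_of_surjective g hg)
  have extend_apply_cases (j : σ) : (∃ i, g i = j) ∨
      Function.extend g f 0 j = 0 ∧ Function.extend g deg 1 j = 1 :=
    or_iff_not_imp_left.2 fun hj =>
      ⟨Function.extend_apply' _ _ _ hj, Function.extend_apply' _ _ _ hj⟩
  have hext : IsHSOP (Function.extend g f 0) (Function.extend g deg 1) := by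
    refine isHSOP_of_eval (fun j => ?_) (fun j => ?_) fun v hv => ?_
    · obtain ⟨i, rfl⟩ | ⟨hj, -⟩ := extend_apply_cases j
      · simpa only [g.injective.extend_apply] using hf i
      · exact hj ▸ isHomogeneous_zero _ _ _
    · obtain ⟨i, rfl⟩ | ⟨-, hj⟩ := extend_apply_cases j
      · simpa only [g.injective.extend_apply] using hdeg i
      · exact hj ▸ one_pos
    · by_contra hv0
      obtain ⟨i, hi⟩ := hcon v hv0
      exact hi (by simpa only [g.injective.extend_apply] using hv (g i))
  refine hext.notMem_span (Set.notMem_empty k) ?_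
  rw [Function.extend_apply' _ _ _ hk]
  exact zero_mem _

/-- The Jacobian criterion for the projective hypersurface `V(P)` to be smooth: the partial
derivatives of `P` have no common zero on the punctured cone over it. -/
def IsSmoothForm {σ K : Type*} [CommSemiring K] (P : MvPolynomial σ K) : Prop :=
  ∀ v : σ → K, v ≠ 0 → eval v P = 0 → ∃ i, eval v (pderiv i P) ≠ 0

theorem IsSmoothForm.ne_zero {σ K : Type*} [Nonempty σ] [CommSemiring K] [Nontrivial K]
    {P : MvPolynomial σ K} (hsm : IsSmoothForm P) : P ≠ 0 := by
  rintro rfl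
  obtain ⟨i, hi⟩ := hsm 1 one_ne_zero (map_zero _)
  exact hi (by rw [map_zero, map_zero])

theorem IsSmoothForm.prime [Fintype σ] {P : MvPolynomial σ K} (hsm : IsSmoothForm P)
    (hσ : 3 ≤ Fintype.card σ) {d : ℕ} (hP : P.IsHomogeneous d) (hd : 0 < d) : Prime P := by
  have : Nonempty σ := Fintype.card_pos_iff.1 (by lia)
  have hP0 := hsm.ne_zero
  rw [← irreducible_iff_prime]
  refine ⟨not_isUnit_of_isHomogeneous hP hd, fun A B hAB => ?_⟩
  by_contra! hunits
  subst hAB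
  have hA := isHomogeneous_totalDegree_of_mul hP hP0
  have hB : B.IsHomogeneous B.totalDegree :=
    isHomogeneous_totalDegree_of_mul (mul_comm A B ▸ hP) (mul_comm A B ▸ hP0)
  have hA0 : 0 < A.totalDegree := Nat.pos_of_ne_zero fun h =>
    hunits.1 (isUnit_of_totalDegree_eq_zero h (left_ne_zero_of_mul hP0))
  have hB0 : 0 < B.totalDegree := Nat.pos_of_ne_zero fun h =>
    hunits.2 (isUnit_of_totalDegree_eq_zero h (right_ne_zero_of_mul hP0))
  obtain ⟨v, hv, hv0⟩ := exists_ne_zero_forall_eval_eq_zero (ι := Fin 2)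
    (by rw [Fintype.card_fin]; exact hσ) (f := ![A, B]) (deg := ![A.totalDegree, B.totalDegree])
    (Fin.forall_fin_two.2 ⟨hA, hB⟩) (Fin.forall_fin_two.2 ⟨hA0, hB0⟩)
  have hvA : eval v A = 0 := hv0 0
  have hvB : eval v B = 0 := hv0 1
  obtain ⟨i, hi⟩ := hsm v hv (by simp [hvA])
  exact hi (by simp [hvA, hvB])

theorem IsSmoothForm.isHSOP_pderiv [Finite σ] [CharZero K] {P : MvPolynomial σ K}
    (hsm : IsSmoothForm P) {d : ℕ} (hP : P.IsHomogeneous d) (hd : 2 ≤ d) :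
    IsHSOP (fun i => pderiv i P) fun _ => d - 1 := by
  cases nonempty_fintype σ
  refine isHSOP_of_eval (fun i => hP.pderiv) (fun _ => by lia) fun v hv => ?_
  by_contra hv0
  have hEuler := congrArg (eval v) hP.sum_X_mul_pderiv
  simp only [map_sum, map_mul, hv, mul_zero, Finset.sum_const_zero, nsmul_eq_mul,
    map_natCast] at hEuler
  have hd0 : (d : K) ≠ 0 := Nat.cast_ne_zero.2 (by lia)
  obtain ⟨i, hi⟩ := hsm v hv0 ((mul_eq_zero.1 hEuler.symm).resolve_left hd0)
  exact hi (hv i)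

end Irreducible

section Derivation

theorem derivation_aeval {σ R S M : Type*} [Fintype σ] [CommRing R] [CommRing S] [Algebra R S]
    [AddCommGroup M] [Module R M] [Module S M] [IsScalarTower R S M] (δ : Derivation R S M)
    (F : σ → S) (p : MvPolynomial σ R) :
    δ (aeval F p) = ∑ j, aeval F (pderiv j p) • δ (F j) := by
  classical
  induction p using MvPolynomial.induction_on with
  | C a => simp
  | add p q hp hq => simp only [map_add, hp, hq, add_smul, Finset.sum_add_distrib]
  | mul_X p i hp =>
    simp only [map_mul, map_add, aeval_X, Derivation.leibniz, pderiv_X, hp, smul_eq_mul,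
      add_smul, Finset.sum_add_distrib, Finset.smul_sum, smul_smul]
    congr 1
    simp [Pi.single_apply, apply_ite (aeval F), ite_smul]

theorem derivation_eq_sum {σ R M : Type*} [Fintype σ] [CommRing R] [AddCommGroup M] [Module R M]
    [Module (MvPolynomial σ R) M] [IsScalarTower R (MvPolynomial σ R) M]
    (δ : Derivation R (MvPolynomial σ R) M) (p : MvPolynomial σ R) :
    δ p = ∑ j, pderiv j p • δ (X j) := by
  simpa only [aeval_X_left_apply] using derivation_aeval δ X p

theorem aeval_derivative_minpoly_ne_zero {A L : Type*} (K : Type*) [Field K] [CharZero K]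
    [CommRing A] [Algebra K A] [CommRing L] [Nontrivial L] [Algebra A L] {x : L}
    (hx : IsIntegral A x) : Polynomial.aeval x (minpoly A x).derivative ≠ 0 := by
  intro h
  have hpos := minpoly.natDegree_pos hx
  set n := (minpoly A x).natDegree
  set q := Polynomial.C (algebraMap K A (n : K)⁻¹) * (minpoly A x).derivative
  have hq : q.natDegree ≤ n - 1 :=
    (Polynomial.natDegree_C_mul_le _ _).trans (Polynomial.natDegree_derivative_le _)
  have hqmonic : q.Monic := by
    refine Polynomial.monic_of_natDegree_le_of_coeff_eq_one _ hq ?_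
    have hn : (n : K) ≠ 0 := Nat.cast_ne_zero.2 hpos.ne'
    rw [Polynomial.coeff_C_mul, Polynomial.coeff_derivative, ← Nat.cast_succ, Nat.succ_eq_add_one,
      Nat.sub_add_cancel hpos, (minpoly.monic hx).coeff_natDegree, one_mul,
      ← map_natCast (algebraMap K A), ← map_mul, inv_mul_cancel₀ hn, map_one]
  have hle := Polynomial.natDegree_le_natDegree
    (minpoly.min A x hqmonic (by rw [map_mul, h, mul_zero]))
  lia

variable {K R L : Type*} [Field K] [CharZero K] [CommRing R] [Algebra K R] [Field L] [Algebra K L]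
  [Algebra R L]

theorem derivation_eq_zero_of_isIntegral {A : Subalgebra K R} {δ : Derivation K R L}
    (hA : ∀ a ∈ A, δ a = 0) (hker : ∀ z, algebraMap R L z = 0 → δ z = 0) {x : R}
    (hx : IsIntegral A (algebraMap R L x)) : δ x = 0 := by
  let δA : Derivation A R L :=
    { δ with
      map_smul' a z := by
        change δ (a.1 * z) = a.1 • δ z
        rw [Derivation.leibniz, hA a.1 a.2, smul_zero, add_zero]
      map_one_eq_zero' := δ.map_one_eq_zero
      leibniz' := δ.leibniz }
  set p := minpoly A (algebraMap R L x)
  have hroot : algebraMap R L (Polynomial.aeval x p) = 0 := by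
    rw [← Polynomial.aeval_algebraMap_apply, minpoly.aeval]
  have hmul : Polynomial.aeval (algebraMap R L x) p.derivative * δ x = 0 := by
    rw [Polynomial.aeval_algebraMap_apply, ← Algebra.smul_def, ← hker _ hroot]
    exact (δA.map_aeval p x).symm
  exact (mul_eq_zero.1 hmul).resolve_left (aeval_derivative_minpoly_ne_zero K hx)

end Derivation

section Finiteness

variable {σ ι R : Type*} [CommRing R] {I : Ideal (MvPolynomial σ R)}
  {T : ι → MvPolynomial σ R} {e : ℕ}

theorem exists_isHomogeneous_sub_sum_mem [Fintype ι]
    (hI : I.IsHomogeneous (homogeneousSubmodule σ R)) (hT : ∀ i, (T i).IsHomogeneous e)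
    {y : MvPolynomial σ R} {D : ℕ} (hy : y.IsHomogeneous D)
    (h : y ∈ I ⊔ Ideal.span (Set.range T)) :
    ∃ u : ι → MvPolynomial σ R, (∀ i, (u i).IsHomogeneous (D - e)) ∧
      (D < e → u = 0) ∧ y - ∑ i, u i * T i ∈ I := by
  obtain ⟨a, ha, b, hb, rfl⟩ := Submodule.mem_sup.1 h
  have hspan := isHomogeneous_span (s := Set.range T) (by rintro _ ⟨i, rfl⟩; exact ⟨e, hT i⟩)
  obtain ⟨u, hu, hu0, hsum⟩ := exists_isHomogeneous_coeffs hT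
    (homogeneousComponent_isHomogeneous D b) (homogeneousComponent_mem_of_mem hspan hb D)
  refine ⟨u, hu, fun hD => funext fun i => hu0 i hD, ?_⟩
  rw [hsum, ← homogeneousComponent_eq_self hy, map_add, add_sub_cancel_right]
  exact homogeneousComponent_mem_of_mem hI ha D

theorem mk_mem_span_adjoin [Finite ι] (hI : I.IsHomogeneous (homogeneousSubmodule σ R))
    (hT : ∀ i, (T i).IsHomogeneous e) (he : 0 < e) {N : ℕ}
    (hN : ∀ D, N ≤ D → ∀ p : MvPolynomial σ R, p.IsHomogeneous D →
      p ∈ I ⊔ Ideal.span (Set.range T))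
    {D : ℕ} {z : MvPolynomial σ R} (hz : z.IsHomogeneous D) :
    Ideal.Quotient.mk I z ∈ Submodule.span (Algebra.adjoin R (Set.range T))
      ((fun m => Ideal.Quotient.mk I (monomial m 1)) '' {m : σ →₀ ℕ | m.degree < N}) := by
  cases nonempty_fintype ι
  set A := Algebra.adjoin R (Set.range T)
  set E := (fun m : σ →₀ ℕ => Ideal.Quotient.mk I (monomial m 1)) '' {m | m.degree < N}
  have mul_mem_span {a q : MvPolynomial σ R} (ha : a ∈ A)
      (hq : Ideal.Quotient.mk I q ∈ Submodule.span A E) :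
      Ideal.Quotient.mk I (a * q) ∈ Submodule.span A E := by
    have mk_mul : Ideal.Quotient.mk I (a * q) = (⟨a, ha⟩ : A) • Ideal.Quotient.mk I q := rfl
    exact mk_mul ▸ Submodule.smul_mem _ _ hq
  induction D using Nat.strong_induction_on generalizing z with | _ D ih
  rcases lt_or_ge D N with hlt | hle
  · rw [z.as_sum, map_sum]
    refine Submodule.sum_mem _ fun m hm => ?_
    rw [← mul_one (coeff m z), ← C_mul_monomial]
    refine mul_mem_span (A.algebraMap_mem _) (Submodule.subset_span ⟨m, ?_, rfl⟩)
    rw [Set.mem_ofPred_eq, Finsupp.degree_eq_weight_one]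
    exact (hz (mem_support_iff.1 hm)).trans_lt hlt
  · obtain ⟨u, hu, hu0, hmem⟩ := exists_isHomogeneous_sub_sum_mem hI hT hz (hN D hle z hz)
    rw [Ideal.Quotient.eq.2 hmem, map_sum]
    refine Submodule.sum_mem _ fun i _ => ?_
    rw [mul_comm]
    refine mul_mem_span (Algebra.subset_adjoin ⟨i, rfl⟩) ?_
    rcases lt_or_ge D e with hDe | heD
    · rw [hu0 hDe, Pi.zero_apply, map_zero]
      exact Submodule.zero_mem _
    · exact ih (D - e) (by lia) (hu i)

theorem finite_adjoin_quotient [Finite σ] [Finite ι]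
    (hI : I.IsHomogeneous (homogeneousSubmodule σ R)) (hT : ∀ i, (T i).IsHomogeneous e) (he : 0 < e)
    (hrad : idealOfVars σ R ≤ (I ⊔ Ideal.span (Set.range T)).radical) :
    Module.Finite (Algebra.adjoin R (Set.range T)) (MvPolynomial σ R ⧸ I) := by
  obtain ⟨N, hN⟩ := exists_isHomogeneous_mem_of_idealOfVars_le_radical hrad
  have hE := (Finsupp.finite_of_degree_lt N).image fun m : σ →₀ ℕ =>
    Ideal.Quotient.mk I (monomial m 1)
  refine ⟨Submodule.fg_def.2 ⟨_, hE, eq_top_iff.2 fun y _ => ?_⟩⟩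
  obtain ⟨z, rfl⟩ := Ideal.Quotient.mk_surjective y
  rw [← sum_homogeneousComponent z, map_sum]
  exact Submodule.sum_mem _ fun D _ =>
    mk_mem_span_adjoin hI hT he hN (homogeneousComponent_isHomogeneous D z)

/-- The elements of the coordinate ring killed by a derivation form an integrally closed
subring, and the coordinate ring is finite over the subalgebra generated by the `T i`. -/
theorem derivation_eq_zero {K : Type*} [Field K] [CharZero K] [Finite σ] [Finite ι]
    {I : Ideal (MvPolynomial σ K)} [I.IsPrime] {T : ι → MvPolynomial σ K}
    (hI : I.IsHomogeneous (homogeneousSubmodule σ K))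
    (hT : ∀ i, (T i).IsHomogeneous e) (he : 0 < e)
    (hrad : idealOfVars σ K ≤ (I ⊔ Ideal.span (Set.range T)).radical)
    {δ : Derivation K (MvPolynomial σ K) I.ResidueField}
    (hδI : ∀ z ∈ I, δ z = 0) (hδT : ∀ i, δ (T i) = 0) : δ = 0 := by
  have hA : ∀ a ∈ Algebra.adjoin K (Set.range T), δ a = 0 := by
    intro a ha
    refine δ.eqOn_adjoin (D2 := 0) ?_ ha
    rintro _ ⟨i, rfl⟩
    exact hδT i
  have := finite_adjoin_quotient hI hT he hrad
  refine Derivation.ext fun x => derivation_eq_zero_of_isIntegral hA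
    (fun z hz => hδI z (Ideal.algebraMap_residueField_eq_zero.1 hz)) ?_
  rw [IsScalarTower.algebraMap_apply _ (MvPolynomial σ K ⧸ I)]
  exact (Algebra.IsIntegral.isIntegral _).algebraMap

end Finiteness

section Wronskian

/-- The numerator of the `i`-th partial derivative of the rational function `b / a`. -/
noncomputable def wronskian {σ R : Type*} [CommRing R] (a b : MvPolynomial σ R) (i : σ) :
    MvPolynomial σ R :=
  a * pderiv i b - b * pderiv i a

theorem isHomogeneous_wronskian {σ R : Type*} [CommRing R] {a b : MvPolynomial σ R} {e : ℕ}
    (ha : a.IsHomogeneous e) (hb : b.IsHomogeneous e) (he : 0 < e) (i : σ) :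
    (wronskian a b i).IsHomogeneous (2 * e - 1) := by
  rw [show 2 * e - 1 = e + (e - 1) by lia]
  exact (ha.mul hb.pderiv).sub (hb.mul ha.pderiv)

variable {σ K : Type*} [Field K] [Fintype σ]

theorem exists_derivation_ne_zero {ι L : Type*} [Fintype ι] [Field L] [Algebra K L]
    [Algebra (MvPolynomial σ K) L] [IsScalarTower K (MvPolynomial σ K) L]
    (hι : Fintype.card ι < Fintype.card σ) (p : ι → MvPolynomial σ K) :
    ∃ δ : Derivation K (MvPolynomial σ K) L, δ ≠ 0 ∧ ∀ i, δ (p i) = 0 := by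
  classical
  let jacobian : Matrix ι σ L :=
    .of fun i j => algebraMap (MvPolynomial σ K) L (pderiv j (p i))
  have hker : LinearMap.ker jacobian.mulVecLin ≠ ⊥ :=
    LinearMap.ker_ne_bot_of_finrank_lt (by simpa only [Module.finrank_fintype_fun_eq_card] using hι)
  obtain ⟨w, hw, hw0⟩ := Submodule.exists_mem_ne_zero_of_ne_bot hker
  refine ⟨mkDerivation K w, fun h => hw0 (funext fun i => ?_), fun i => ?_⟩
  · rw [← mkDerivation_X K w i, h, Derivation.zero_apply, Pi.zero_apply]
  · rw [derivation_eq_sum]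
    simpa [jacobian, Matrix.mulVec, dotProduct, Algebra.smul_def]
      using congrFun (LinearMap.mem_ker.1 hw) i

/-- Otherwise a nonzero derivation along `V(P)` killing `T i₀` would kill every `T k`. -/
theorem exists_wronskian_notMem [CharZero K] (hσ : 3 ≤ Fintype.card σ) {P : MvPolynomial σ K}
    {d : ℕ} (hP : P.IsHomogeneous d) (hprime : Prime P)
    {T : σ → MvPolynomial σ K} {e : ℕ} (hT : ∀ i, (T i).IsHomogeneous e) (he : 0 < e)
    (hrad : idealOfVars σ K ≤ (Ideal.span {P} ⊔ Ideal.span (Set.range T)).radical)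
    {i₀ : σ} (hTi₀ : T i₀ ∉ Ideal.span {P}) (u : σ → MvPolynomial σ K) :
    ∃ k ≠ i₀, ∃ i, wronskian (T i₀) (T k) i - u k * pderiv i P ∉ Ideal.span {P} := by
  by_contra! h
  have : (Ideal.span {P}).IsPrime := (Ideal.span_singleton_prime hprime.ne_zero).2 hprime
  obtain ⟨δ, hδ0, hδ⟩ := exists_derivation_ne_zero (K := K) (L := (Ideal.span {P}).ResidueField)
    (ι := Fin 2) (by rw [Fintype.card_fin]; exact hσ) ![P, T i₀]
  have hδP : δ P = 0 := hδ 0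
  have hδTi₀ : δ (T i₀) = 0 := hδ 1
  have smul_eq_zero_of_mem {a : MvPolynomial σ K} (ha : a ∈ Ideal.span {P})
      (w : (Ideal.span {P}).ResidueField) : a • w = 0 := by
    rw [Algebra.smul_def, Ideal.algebraMap_residueField_eq_zero.2 ha, zero_mul]
  refine hδ0 (derivation_eq_zero (isHomogeneous_span (by simpa using ⟨d, hP⟩)) hT he hrad ?_ ?_)
  · intro z hz
    obtain ⟨c, rfl⟩ := Ideal.mem_span_singleton.1 hz
    rw [Derivation.leibniz, hδP, smul_zero, add_zero,
      smul_eq_zero_of_mem (Ideal.mem_span_singleton_self P)]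
  · intro k
    obtain rfl | hk := eq_or_ne k i₀
    · exact hδTi₀
    have hsum : T i₀ • δ (T k) - T k • δ (T i₀) - u k • δ P = 0 := by
      simp only [derivation_eq_sum δ (T k), derivation_eq_sum δ (T i₀), derivation_eq_sum δ P,
        Finset.smul_sum, ← Finset.sum_sub_distrib, smul_smul, ← sub_smul]
      exact Finset.sum_eq_zero fun i _ => smul_eq_zero_of_mem (h k hk i) _
    rw [hδP, hδTi₀, smul_zero, smul_zero, sub_zero, sub_zero, Algebra.smul_def] at hsum
    exact (mul_eq_zero.1 hsum).resolve_left fun h0 =>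
      hTi₀ (Ideal.algebraMap_residueField_eq_zero.1 h0)

end Wronskian

section Syzygy

variable {σ K : Type*} [Field K] [Fintype σ] [DecidableEq σ] {P G : MvPolynomial σ K}
  {T Q : σ → MvPolynomial σ K} {i₀ : σ} {d e γ : ℕ}

theorem sum_mul_wronskian_sub_mem (hEuler : ∑ k, T k * Q k ∈ Ideal.span {P})
    (hchain : ∀ i, ∑ k, Q k * pderiv i (T k) = pderiv i (G * P)) (i₀ i : σ) :
    ∑ k ∈ {i₀}ᶜ, Q k * wronskian (T i₀) (T k) i - G * T i₀ * pderiv i P ∈ Ideal.span {P} := by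
  have hP := Ideal.mem_span_singleton_self P
  have hsum : ∑ k ∈ {i₀}ᶜ, Q k * wronskian (T i₀) (T k) i =
      T i₀ * ∑ k, Q k * pderiv i (T k) - pderiv i (T i₀) * ∑ k, T k * Q k := by
    rw [Finset.mul_sum, Finset.mul_sum, ← Finset.sum_sub_distrib, Fintype.sum_eq_add_sum_compl i₀,
      show T i₀ * (Q i₀ * pderiv i (T i₀)) - pderiv i (T i₀) * (T i₀ * Q i₀) = 0 by ring, zero_add]
    exact Finset.sum_congr rfl fun k _ => by rw [wronskian]; ring
  rw [hsum, hchain, Derivation.leibniz, smul_eq_mul, smul_eq_mul,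
    show T i₀ * (G * pderiv i P + P * pderiv i G) - pderiv i (T i₀) * ∑ k, T k * Q k -
      G * T i₀ * pderiv i P = T i₀ * pderiv i G * P - pderiv i (T i₀) * ∑ k, T k * Q k by ring]
  exact sub_mem (Ideal.mul_mem_left _ _ hP) (Ideal.mul_mem_left _ _ hEuler)

theorem mem_span_range_update_of_sub_sum_mem {y : MvPolynomial σ K} {w : σ → MvPolynomial σ K}
    (h : ∑ k ∈ {i₀}ᶜ, Q k * w k - y ∈ Ideal.span {P}) :
    y ∈ Ideal.span (Set.range (Function.update Q i₀ P)) := by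
  rw [span_range_update]
  have hsum : ∑ k ∈ {i₀}ᶜ, Q k * w k ∈ Ideal.span (Q '' {i₀}ᶜ) :=
    Ideal.sum_mem _ fun k hk => Ideal.mul_mem_right _ _
      (Ideal.subset_span ⟨k, by simpa using hk, rfl⟩)
  rw [← sub_sub_cancel (∑ k ∈ {i₀}ᶜ, Q k * w k) y]
  exact sub_mem (Ideal.mem_sup_left hsum) (Ideal.mem_sup_right h)

variable [Infinite K]

theorem mem_span_singleton_of_sum_mul_mem
    (hQ : IsHSOP (Function.update Q i₀ P) (Function.update (fun _ => γ) i₀ d))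
    {w : σ → MvPolynomial σ K} (hsum : ∑ j ∈ {i₀}ᶜ, Q j * w j ∈ Ideal.span {P})
    {k : σ} (hk : k ≠ i₀) {D : ℕ} (hw : (w k).IsHomogeneous D) (hD : D < γ) :
    w k ∈ Ideal.span {P} := by
  have hwk : w k ∈ Ideal.span (Function.update Q i₀ P '' {k}ᶜ) := by
    have hP : P ∈ Ideal.span (Function.update Q i₀ P '' {k}ᶜ) :=
      Ideal.subset_span ⟨i₀, hk.symm, Function.update_self _ _ _⟩
    refine isSMulRegular_quotient_iff.1 (hQ.isPermutablyRegular {k}ᶜ k (by simp)) _ ?_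
    rw [← Finset.add_sum_erase _ _ (show k ∈ ({i₀}ᶜ : Finset σ) by simpa using hk)] at hsum
    rw [Function.update_of_ne hk]
    refine (Submodule.add_mem_iff_left _ (Ideal.sum_mem _ fun j hj => ?_)).1
      ((Ideal.span_singleton_le_iff_mem _).2 hP hsum)
    obtain ⟨hjk, hji₀⟩ : j ≠ k ∧ j ≠ i₀ := by simpa using hj
    exact Ideal.mul_mem_right _ _ (Ideal.subset_span ⟨j, hjk, Function.update_of_ne hji₀ _ _⟩)
  refine Ideal.span_mono ?_ (mem_span_image_sep_of_isHomogeneous hQ.isHomogeneous hw hwk)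
  rintro _ ⟨j, ⟨-, hj⟩, rfl⟩
  obtain rfl | hji₀ := eq_or_ne j i₀
  · exact Function.update_self _ _ _
  · rw [Function.update_of_ne hji₀] at hj
    exact absurd hj hD.not_ge

theorem notMem_span_singleton_of_isHSOP_update (hprime : Prime P) (hP : P.IsHomogeneous d)
    (hd : 2 ≤ d) (hQ : IsHSOP (Function.update Q i₀ P) (Function.update (fun _ => γ) i₀ d))
    (hT : ∀ k, (T k).IsHomogeneous e) (he : e < γ) (hEuler : ∑ k, T k * Q k ∈ Ideal.span {P})
    (hrad : idealOfVars σ K ≤ (Ideal.span {P} ⊔ Ideal.span (Set.range T)).radical) :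
    T i₀ ∉ Ideal.span {P} := by
  intro hTi₀
  have hsum : ∑ k ∈ {i₀}ᶜ, Q k * T k ∈ Ideal.span {P} := by
    rw [Fintype.sum_eq_add_sum_compl i₀] at hEuler
    simpa only [mul_comm] using
      (Submodule.add_mem_iff_right _ (Ideal.mul_mem_right _ _ hTi₀)).1 hEuler
  have hT_mem (k : σ) : T k ∈ Ideal.span {P} := by
    obtain rfl | hk := eq_or_ne k i₀
    · exact hTi₀
    · exact mem_span_singleton_of_sum_mul_mem hQ hsum hk (hT k) he
  refine notMem_span_singleton_of_isHomogeneous hP (isHomogeneous_X K i₀) (X_ne_zero i₀) hd ?_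
  refine idealOfVars_le_iff.1 (hrad.trans ?_) i₀
  rw [((Ideal.span_singleton_prime hprime.ne_zero).2 hprime).radical_le_iff]
  exact sup_le le_rfl (Ideal.span_le.2 (Set.range_subset_iff.2 hT_mem))

end Syzygy

section Socle

variable {σ K : Type*} [Field K] [Fintype σ] [DecidableEq σ] {P G : MvPolynomial σ K}
  {T Q : σ → MvPolynomial σ K} {i₀ : σ} {d e : ℕ}

theorem le_socleDegree {c : ℕ} (hc : 4 ≤ c) (hd : 3 ≤ d) (he : 2 ≤ e) :
    d * (e - 1) + e + (c * (d - 2) + 1) ≤ d - 1 + (c - 1) * (e * (d - 1) - 1) := by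
  obtain ⟨c, rfl⟩ := Nat.exists_eq_add_of_le hc
  obtain ⟨d, rfl⟩ := Nat.exists_eq_add_of_le hd
  obtain ⟨e, rfl⟩ := Nat.exists_eq_add_of_le he
  rw [show 2 + e - 1 = e + 1 by lia, show 3 + d - 2 = d + 1 by lia, show 3 + d - 1 = d + 2 by lia,
    show 4 + c - 1 = c + 3 by lia,
    show (2 + e) * (d + 2) - 1 = e * d + 2 * d + 2 * e + 3 by ring_nf; lia]
  nlinarith [Nat.zero_le (e * d), Nat.zero_le (c * e * d), Nat.zero_le (c * d),
    Nat.zero_le (c * e)]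

/-- All forms of degree greater than `card σ * (d - 2)` lie in the Jacobian ideal, which multiplies
`G * T i₀` into the ideal of the system; socle duality then puts `G * T i₀` there. -/
theorem mul_mem_span_range_update [Infinite K] (hσ : 4 ≤ Fintype.card σ) (hd : 3 ≤ d)
    (he : 2 ≤ e) (hJ : IsHSOP (fun i => pderiv i P) fun _ => d - 1)
    (hG : G.IsHomogeneous (d * (e - 1))) (hTi₀ : (T i₀).IsHomogeneous e)
    (hQ : IsHSOP (Function.update Q i₀ P) (Function.update (fun _ => e * (d - 1)) i₀ d))
    (hW : ∀ i, ∑ k ∈ {i₀}ᶜ, Q k * wronskian (T i₀) (T k) i - G * T i₀ * pderiv i P ∈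
      Ideal.span {P}) :
    G * T i₀ ∈ Ideal.span (Set.range (Function.update Q i₀ P)) := by
  have hsocle : ∑ i, (Function.update (fun _ => e * (d - 1)) i₀ d i - 1) =
      d - 1 + (Fintype.card σ - 1) * (e * (d - 1) - 1) := by
    rw [Fintype.sum_eq_add_sum_compl i₀, Function.update_self,
      Finset.sum_congr rfl fun k hk => by rw [Function.update_of_ne (by simpa using hk)],
      Finset.sum_const, Finset.card_compl, Finset.card_singleton, smul_eq_mul]
  refine hQ.hasSocleDegree.mem_of_forall_mul_mem (Fintype.card σ * (d - 2) + 1) (hG.mul hTi₀)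
    (by rw [hsocle]; exact le_socleDegree hσ hd he) fun z hz => ?_
  have hzJ : z ∈ Ideal.span (Set.range fun i => pderiv i P) := by
    refine hJ.hasSocleDegree.mem_of_lt hJ.le_radical hz ?_
    rw [Finset.sum_const, Finset.card_univ, smul_eq_mul, Nat.sub_sub]
    exact Nat.lt_succ_self _
  obtain ⟨c, rfl⟩ := Ideal.mem_span_range_iff_exists_fun.1 hzJ
  rw [Finset.sum_mul]
  refine Ideal.sum_mem _ fun i _ => ?_
  rw [mul_assoc, mul_comm (pderiv i P)]
  exact Ideal.mul_mem_left _ _ (mem_span_range_update_of_sub_sum_mem (hW i))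

theorem exists_isHomogeneous_sum_sub_mem (hd : 3 ≤ d) (he : 2 ≤ e) (hP : P.IsHomogeneous d)
    (hQ : IsHSOP (Function.update Q i₀ P) (Function.update (fun _ => e * (d - 1)) i₀ d))
    {y : MvPolynomial σ K} (hy : y.IsHomogeneous (d * (e - 1) + e))
    (hmem : y ∈ Ideal.span (Set.range (Function.update Q i₀ P))) :
    ∃ u : σ → MvPolynomial σ K,
      (∀ k ≠ i₀, ∀ i, (u k * pderiv i P).IsHomogeneous (2 * e - 1)) ∧
        ∑ k ∈ {i₀}ᶜ, Q k * u k - y ∈ Ideal.span {P} := by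
  obtain ⟨u, hu, hu0, hsum⟩ := exists_isHomogeneous_coeffs hQ.isHomogeneous hy hmem
  refine ⟨u, fun k hk i => ?_, ?_⟩
  · specialize hu k
    specialize hu0 k
    rw [Function.update_of_ne hk] at hu hu0
    have hdeg : d * (e - 1) + e + d = e * (d - 1) + 2 * e := by
      obtain ⟨d, rfl⟩ := Nat.exists_eq_add_of_le' (show 1 ≤ d by lia)
      obtain ⟨e, rfl⟩ := Nat.exists_eq_add_of_le' (show 1 ≤ e by lia)
      simp only [Nat.add_sub_cancel]
      ring
    rcases lt_or_ge (2 * e) d with hlt | hle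
    · rw [hu0 (by lia), zero_mul]
      exact isHomogeneous_zero _ _ _
    · rw [show 2 * e - 1 = d * (e - 1) + e - e * (d - 1) + (d - 1) by lia]
      exact hu.mul hP.pderiv
  · have hsplit : ∑ k ∈ {i₀}ᶜ, Q k * u k - y = -u i₀ * P := by
      rw [← hsum, Fintype.sum_eq_add_sum_compl i₀, Function.update_self,
        Finset.sum_congr rfl fun k hk => by
          rw [mul_comm, ← Function.update_of_ne (show k ≠ i₀ by simpa using hk) P Q]]
      ring
    rw [hsplit]
    exact Ideal.mul_mem_left _ _ (Ideal.mem_span_singleton_self P)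

theorem not_isHSOP_update [CharZero K] (hσ : 4 ≤ Fintype.card σ) (hd : 3 ≤ d) (he : 2 ≤ e)
    (hprime : Prime P) (hP : P.IsHomogeneous d)
    (hJ : IsHSOP (fun i => pderiv i P) fun _ => d - 1) (hG : G.IsHomogeneous (d * (e - 1)))
    (hT : ∀ k, (T k).IsHomogeneous e) (hEuler : ∑ k, T k * Q k ∈ Ideal.span {P})
    (hchain : ∀ i, ∑ k, Q k * pderiv i (T k) = pderiv i (G * P))
    (hrad : idealOfVars σ K ≤ (Ideal.span {P} ⊔ Ideal.span (Set.range T)).radical) :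
    ¬ IsHSOP (Function.update Q i₀ P) (Function.update (fun _ => e * (d - 1)) i₀ d) := by
  intro hQ
  have hdeg : 2 * e ≤ e * (d - 1) := by
    rw [mul_comm 2 e]
    exact Nat.mul_le_mul_left e (by lia)
  have hW := sum_mul_wronskian_sub_mem hEuler hchain i₀
  obtain ⟨u, hu, hGT⟩ := exists_isHomogeneous_sum_sub_mem hd he hP hQ (hG.mul (hT i₀))
    (mul_mem_span_range_update hσ hd he hJ hG (hT i₀) hQ hW)
  have hTi₀ := notMem_span_singleton_of_isHSOP_update hprime hP (by lia) hQ hT (by lia) hEuler hrad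
  obtain ⟨k, hk, i, hki⟩ :=
    exists_wronskian_notMem (by lia) hP hprime hT (by lia) hrad hTi₀ u
  refine hki (mem_span_singleton_of_sum_mul_mem hQ
    (w := fun k => wronskian (T i₀) (T k) i - u k * pderiv i P) ?_ hk
    ((isHomogeneous_wronskian (hT i₀) (hT k) (by lia) i).sub (hu k hk i)) (by lia))
  have hsyz : ∑ j ∈ {i₀}ᶜ, Q j * (wronskian (T i₀) (T j) i - u j * pderiv i P) =
      (∑ j ∈ {i₀}ᶜ, Q j * wronskian (T i₀) (T j) i - G * T i₀ * pderiv i P) -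
        pderiv i P * (∑ j ∈ {i₀}ᶜ, Q j * u j - G * T i₀) := by
    rw [mul_sub, Finset.mul_sum, sub_sub_sub_comm, ← Finset.sum_sub_distrib,
      mul_comm (pderiv i P), sub_self, sub_zero]
    exact Finset.sum_congr rfl fun j _ => by ring
  rw [hsyz]
  exact sub_mem (hW i) (Ideal.mul_mem_left _ _ hGT)

end Socle

section AdaptedCoordinates

variable {σ K : Type*}

theorem eval_smul_of_isHomogeneous [CommSemiring K] {P : MvPolynomial σ K} {d : ℕ}
    (hP : P.IsHomogeneous d) (r : K) (v : σ → K) : eval (r • v) P = r ^ d * eval v P := by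
  rw [eval_eq, eval_eq, Finset.mul_sum]
  refine Finset.sum_congr rfl fun m hm => ?_
  simp only [Pi.smul_apply, smul_eq_mul, mul_pow, Finset.prod_mul_distrib,
    Finset.prod_pow_eq_pow_sum, ← hP.degree_eq_sum_deg_support hm]
  ring

theorem eval_zero_of_isHomogeneous [CommSemiring K] {P : MvPolynomial σ K} {d : ℕ}
    (hP : P.IsHomogeneous d) (hd : d ≠ 0) : eval 0 P = 0 := by
  simpa only [smul_zero, zero_pow hd, zero_mul] using eval_smul_of_isHomogeneous hP 0 0

variable [Field K]

theorem IsHSOP.idealOfVars_le_of_isPrime {g : σ → MvPolynomial σ K} {deg : σ → ℕ}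
    (hg : IsHSOP g deg) {q : Ideal (MvPolynomial σ K)} (hq : q.IsPrime) (h : ∀ i, g i ∈ q) :
    idealOfVars σ K ≤ q :=
  hg.le_radical.trans (hq.radical_le_iff.2 (Ideal.span_le.2 (Set.range_subset_iff.2 h)))

theorem IsHSOP.linearIndependent [Finite σ] [Infinite K] {f : σ → MvPolynomial σ K} {deg : σ → ℕ}
    (hf : IsHSOP f deg) : LinearIndependent K f :=
  linearIndependent_iff_notMem_span.2 fun k hk =>
    hf.notMem_span (J := Set.univ \ {k}) (by simp) (Submodule.span_le_restrictScalars K _ _ hk)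

theorem exists_isHSOP_update_of_ne_zero [Finite σ] [DecidableEq σ] [IsAlgClosed K]
    {P : MvPolynomial σ K} {d : ℕ} (hP : P.IsHomogeneous d) (hd : 0 < d) (hP0 : P ≠ 0) :
    ∃ (i₀ : σ) (l : σ → MvPolynomial σ K),
      IsHSOP (Function.update l i₀ P) (Function.update (fun _ => 1) i₀ d) := by
  have : Infinite K := IsAlgClosed.instInfinite
  obtain ⟨a, ha⟩ : ∃ a, eval a P ≠ 0 := by
    by_contra! h
    exact hP0 (hP.eq_zero_of_forall_eval_eq_zero h)
  obtain ⟨i₀, hi₀⟩ : ∃ i₀, a i₀ ≠ 0 := by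
    by_contra! h
    exact ha (funext h ▸ eval_zero_of_isHomogeneous hP hd.ne')
  refine ⟨i₀, fun j => C (a i₀) * X j - C (a j) * X i₀, isHSOP_update_of_eval hP hd
    (fun j => (isHomogeneous_C_mul_X _ _).sub (isHomogeneous_C_mul_X _ _)) one_pos
    fun v hvP hv => ?_⟩
  have hva : v = (v i₀ / a i₀) • a := by
    funext j
    obtain rfl | hj := eq_or_ne j i₀
    · exact (div_mul_cancel₀ _ hi₀).symm
    · have hvj := hv j hj
      simp only [map_sub, map_mul, eval_C, eval_X] at hvj
      rw [Pi.smul_apply, smul_eq_mul, div_mul_eq_mul_div, eq_div_iff hi₀]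
      linear_combination hvj
  rw [hva, eval_smul_of_isHomogeneous hP] at hvP
  rw [hva, eq_zero_of_pow_eq_zero ((mul_eq_zero.1 hvP).resolve_right ha), zero_smul]

variable [Fintype σ] [DecidableEq σ]

theorem IsHSOP.det_ne_zero [Infinite K] {g : σ → MvPolynomial σ K} {deg : σ → ℕ}
    {V : Matrix σ σ K} (h : IsHSOP (fun j => ∑ i, V j i • g i) deg) : V.det ≠ 0 := by
  intro hdet
  obtain ⟨c, hc, hcV⟩ := Matrix.exists_vecMul_eq_zero_iff.2 hdet
  refine hc (funext (Fintype.linearIndependent_iff.1 h.linearIndependent c ?_))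
  simp_rw [Finset.smul_sum, smul_smul]
  rw [Finset.sum_comm]
  simp_rw [← Finset.sum_smul]
  exact Finset.sum_eq_zero fun i _ => by
    rw [show ∑ j, c j * V j i = 0 from congrFun hcV i, zero_smul]

theorem IsHSOP.exists_piecewise [Infinite K] {g h : σ → MvPolynomial σ K} {γ : ℕ} {deg : σ → ℕ}
    (hg : IsHSOP g fun _ => γ) (hh : IsHSOP h deg) (A : Finset σ) :
    ∃ V : Matrix σ σ K, IsHSOP (A.piecewise (fun j => ∑ i, V j i • g i) h)
      (A.piecewise (fun _ => γ) deg) := by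
  induction A using Finset.induction_on with
  | empty => exact ⟨0, by simpa only [Finset.piecewise_empty] using hh⟩
  | insert k A hk ih =>
    obtain ⟨V, hV⟩ := ih
    obtain ⟨v, hv⟩ := hV.exists_update k g hg.isHomogeneous (hg.deg_pos k)
      fun q hq _ => hg.idealOfVars_le_of_isPrime hq
    refine ⟨V.updateRow k v, ?_⟩
    rw [Finset.piecewise_insert, Finset.piecewise_insert, Matrix.updateRow_self]
    convert hv using 2
    refine Finset.piecewise_congr _ (fun j hj => ?_) fun _ _ => rfl
    rw [Matrix.updateRow_ne (ne_of_mem_of_not_mem hj hk)]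

theorem IsHSOP.exists_isUnit_det_update [IsAlgClosed K] {g : σ → MvPolynomial σ K} {γ : ℕ}
    (hg : IsHSOP g fun _ => γ) {P : MvPolynomial σ K} {d : ℕ} (hP : P.IsHomogeneous d)
    (hd : 0 < d) (hP0 : P ≠ 0) :
    ∃ (i₀ : σ) (V : Matrix σ σ K), IsUnit V.det ∧
      IsHSOP (Function.update (fun j => ∑ i, V j i • g i) i₀ P)
        (Function.update (fun _ => γ) i₀ d) := by
  have : Infinite K := IsAlgClosed.instInfinite
  obtain ⟨i₀, l, hl⟩ := exists_isHSOP_update_of_ne_zero hP hd hP0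
  obtain ⟨V, hV⟩ := hg.exists_piecewise hl (Finset.univ.erase i₀)
  simp only [Finset.piecewise_erase_univ, Function.update_self] at hV
  obtain ⟨v, hv⟩ := hV.exists_update i₀ g hg.isHomogeneous (hg.deg_pos i₀)
    fun q hq _ => hg.idealOfVars_le_of_isPrime hq
  have hrow : (fun j => ∑ i, V.updateRow i₀ v j i • g i) =
      Function.update (fun j => ∑ i, V j i • g i) i₀ (∑ i, v i • g i) := by
    funext j
    obtain rfl | hj := eq_or_ne j i₀
    · rw [Matrix.updateRow_self, Function.update_self]
    · rw [Matrix.updateRow_ne hj, Function.update_of_ne hj]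
  rw [Function.update_idem, ← hrow] at hv
  refine ⟨i₀, V.updateRow i₀ v, isUnit_iff_ne_zero.2 hv.det_ne_zero, ?_⟩
  rwa [hrow, Function.update_idem]

end AdaptedCoordinates

section PullBack

/-- The forms `F` of degree `e` define a self-map of the projective hypersurface `P = 0`: on the
affine cone over it they have no common zero except the origin, and they preserve this cone. -/
structure InducesSelfMap {σ K : Type*} [CommSemiring K] (P : MvPolynomial σ K)
    (F : σ → MvPolynomial σ K) (e : ℕ) : Prop where
  isHomogeneous : ∀ i, (F i).IsHomogeneous e
  eval_ne_zero : ∀ v, v ≠ 0 → eval v P = 0 → (fun i => eval v (F i)) ≠ 0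
  eval_eval_eq_zero : ∀ v, v ≠ 0 → eval v P = 0 → eval (fun i => eval v (F i)) P = 0

theorem eval_aeval {σ τ K : Type*} [CommSemiring K] (v : τ → K) (F : σ → MvPolynomial τ K)
    (p : MvPolynomial σ K) : eval v (aeval F p) = eval (fun i => eval v (F i)) p := by
  simp only [← coe_aeval_eq_eval, RingHom.coe_coe, comp_aeval_apply]

theorem sum_aeval_pderiv_mul {σ τ K : Type*} [CommRing K] [Fintype σ] {P : MvPolynomial σ K}
    {d : ℕ} (hP : P.IsHomogeneous d) (F : σ → MvPolynomial τ K) :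
    ∑ i, aeval F (pderiv i P) * F i = d • aeval F P := by
  simpa only [map_sum, map_mul, aeval_X, map_nsmul, mul_comm] using
    congrArg (aeval F) hP.sum_X_mul_pderiv

theorem sum_smul_mul_sum_inv_smul {ι R A : Type*} [Fintype ι] [DecidableEq ι] [CommRing R]
    [CommRing A] [Algebra R A] {V : Matrix ι ι R} (hV : IsUnit V.det) (q t : ι → A) :
    ∑ k, (∑ i, V k i • q i) * ∑ j, V⁻¹ j k • t j = ∑ i, q i * t i := by
  have hinv (i j : ι) : ∑ k, V k i * V⁻¹ j k = if j = i then 1 else 0 := by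
    simp only [mul_comm (V _ _), ← Matrix.mul_apply, Matrix.nonsing_inv_mul V hV, Matrix.one_apply]
  calc ∑ k, (∑ i, V k i • q i) * ∑ j, V⁻¹ j k • t j
      = ∑ k, ∑ i, ∑ j, (V k i * V⁻¹ j k) • (q i * t j) := by
        simp only [Finset.sum_mul_sum, smul_mul_smul_comm]
    _ = ∑ i, ∑ j, (∑ k, V k i * V⁻¹ j k) • (q i * t j) := by
        rw [Finset.sum_comm]
        refine Finset.sum_congr rfl fun i _ => ?_
        rw [Finset.sum_comm]
        simp only [Finset.sum_smul]
    _ = ∑ i, q i * t i := by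
        simp only [hinv, ite_smul, one_smul, zero_smul, Finset.sum_ite_eq', Finset.mem_univ,
          if_true]

variable {σ K : Type*} [Field K] [IsAlgClosed K] {P : MvPolynomial σ K}
  {F : σ → MvPolynomial σ K} {d e : ℕ}

theorem InducesSelfMap.exists_aeval_eq_mul [Finite σ] (hF : InducesSelfMap P F e)
    (hprime : Prime P) (hP : P.IsHomogeneous d) (hd : 0 < d) (he : 0 < e) :
    ∃ G : MvPolynomial σ K, G.IsHomogeneous (d * (e - 1)) ∧ aeval F P = G * P := by
  have hpull := hP.aeval F hF.isHomogeneous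
  have hmem : aeval F P ∈ Ideal.span (Set.range fun _ : Unit => P) := by
    rw [Set.range_const]
    refine mem_span_singleton_of_eval hprime fun v hvP => ?_
    obtain rfl | hv := eq_or_ne v 0
    · exact eval_zero_of_isHomogeneous hpull (Nat.mul_pos he hd).ne'
    · rw [eval_aeval]
      exact hF.eval_eval_eq_zero v hv hvP
  obtain ⟨G, hG, -, hsum⟩ := exists_isHomogeneous_coeffs (fun _ => hP) hpull hmem
  refine ⟨G (), ?_, by rw [← hsum, Fintype.sum_unique]⟩
  rw [Nat.mul_sub_one, mul_comm d e]
  exact hG ()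

theorem InducesSelfMap.isHSOP_update [Finite σ] [DecidableEq σ] (hF : InducesSelfMap P F e)
    (hP : P.IsHomogeneous d) (hd : 0 < d) (he : 0 < e) {g : σ → MvPolynomial σ K} {γ : ℕ}
    (hg : ∀ i, (g i).IsHomogeneous γ) (hγ : 0 < γ) {i₀ : σ}
    (h : IsHSOP (Function.update g i₀ P) (Function.update (fun _ => γ) i₀ d)) :
    IsHSOP (Function.update (fun k => aeval F (g k)) i₀ P)
      (Function.update (fun _ => e * γ) i₀ d) := by
  refine isHSOP_update_of_eval hP hd (fun k => (hg k).aeval F hF.isHomogeneous)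
    (Nat.mul_pos he hγ) fun v hvP hv => ?_
  by_contra hv0
  refine hF.eval_ne_zero v hv0 hvP (h.eq_zero_of_eval ?_)
  refine (Function.forall_update_iff g fun _ p => eval _ p = 0).2
    ⟨hF.eval_eval_eq_zero v hv0 hvP, fun k hk => ?_⟩
  rw [← eval_aeval, hv k hk]

theorem InducesSelfMap.idealOfVars_le_radical [Fintype σ] [DecidableEq σ]
    (hF : InducesSelfMap P F e) {W : Matrix σ σ K} (hW : IsUnit W.det) :
    idealOfVars σ K ≤
      (Ideal.span {P} ⊔ Ideal.span (Set.range fun k => ∑ i, W i k • F i)).radical := by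
  rw [← Ideal.span_union]
  refine idealOfVars_le_radical_span_of_eval fun v hv => ?_
  by_contra hv0
  refine hF.eval_ne_zero v hv0 (hv P (.inl rfl)) ?_
  refine Matrix.vecMul_injective_iff_isUnit.2 ((Matrix.isUnit_iff_isUnit_det W).2 hW)
    ((funext fun k => ?_).trans (Matrix.zero_vecMul W).symm)
  have hvk := hv _ (.inr ⟨k, rfl⟩)
  simp only [map_sum, smul_eval] at hvk
  exact (Finset.sum_congr rfl fun i _ => mul_comm _ _).trans hvk

theorem IsSmoothForm.not_inducesSelfMap [Fintype σ] [CharZero K] (hsm : IsSmoothForm P)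
    (hσ : 4 ≤ Fintype.card σ) (hP : P.IsHomogeneous d) (hd : 3 ≤ d) (he : 2 ≤ e) :
    ¬ InducesSelfMap P F e := by
  classical
  intro hF
  have hprime := hsm.prime (by lia) hP (by lia)
  have hJ := hsm.isHSOP_pderiv hP (by lia)
  obtain ⟨i₀, V, hV, hL⟩ := hJ.exists_isUnit_det_update hP (by lia) hprime.ne_zero
  obtain ⟨G, hG, hGP⟩ := hF.exists_aeval_eq_mul hprime hP (by lia) (by lia)
  have hQ := hF.isHSOP_update hP (by lia) (by lia)
    (fun k => isHomogeneous_sum_smul hJ.isHomogeneous (V k)) (by lia) hL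
  have hpair (D : MvPolynomial σ K →ₗ[K] MvPolynomial σ K) :
      ∑ k, aeval F (∑ i, V k i • pderiv i P) * D (∑ i, V⁻¹ i k • F i) =
        ∑ i, aeval F (pderiv i P) * D (F i) := by
    simp only [map_sum, map_smul]
    exact sum_smul_mul_sum_inv_smul hV _ _
  refine not_isHSOP_update (T := fun k => ∑ i, V⁻¹ i k • F i) hσ hd he hprime hP hJ hG
    (fun k => isHomogeneous_sum_smul hF.isHomogeneous fun i => V⁻¹ i k) ?_ (fun i => ?_)
    (hF.idealOfVars_le_radical (V.isUnit_nonsing_inv_det hV)) hQ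
  · simp only [mul_comm (∑ i, V⁻¹ i _ • F i)]
    have hEuler := (hpair LinearMap.id).trans (sum_aeval_pderiv_mul hP F)
    rw [hGP, ← smul_mul_assoc] at hEuler
    exact Ideal.mem_span_singleton'.2 ⟨_, hEuler.symm⟩
  · rw [← hGP, derivation_aeval]
    exact hpair (pderiv i).toLinearMap

theorem isUnit_det_of_forall_mem_range [Fintype σ] [DecidableEq σ] (hprime : Prime P)
    (hP : P.IsHomogeneous d) (hd : 2 ≤ d) {M : Matrix σ σ K}
    (hM : ∀ w, eval w P = 0 → ∃ v, M.mulVec v = w) : IsUnit M.det := by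
  refine isUnit_iff_ne_zero.2 fun hdet => ?_
  obtain ⟨b, hb, hbM⟩ := Matrix.exists_vecMul_eq_zero_iff.2 hdet
  refine notMem_span_singleton_of_isHomogeneous hP (isHomogeneous_sum_smul (isHomogeneous_X K) b)
    (fun h => hb (funext (Fintype.linearIndependent_iff.1 (linearIndependent_X σ K) b h))) hd ?_
  refine mem_span_singleton_of_eval hprime fun w hw => ?_
  obtain ⟨v, rfl⟩ := hM w hw
  calc eval (M.mulVec v) (∑ i, b i • X i) = b ⬝ᵥ M.mulVec v := by
        simp only [map_sum, smul_eval, eval_X, dotProduct]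
    _ = 0 := by rw [Matrix.dotProduct_mulVec, hbM, zero_dotProduct]

end PullBack

section Projective

variable {σ K : Type*} [Field K]

/-- The projective hypersurface of the points all of whose homogeneous coordinates are zeros of
`P`. -/
def projHypersurface (P : MvPolynomial σ K) : Set (Projectivization K (σ → K)) :=
  {x | ∀ (v : σ → K) (hv : v ≠ 0), x = Projectivization.mk K v hv → eval v P = 0}

/-- The self-map `f` of the projective hypersurface is given in homogeneous coordinates by the
polynomials `F`, which in particular have no common zero on it. -/
def IsGivenBy {P : MvPolynomial σ K} (f : projHypersurface P → projHypersurface P)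
    (F : σ → MvPolynomial σ K) : Prop :=
  ∀ (v : σ → K) (hv : v ≠ 0) (hx : Projectivization.mk K v hv ∈ projHypersurface P),
    ∃ hFv : (fun i => eval v (F i)) ≠ 0,
      (f ⟨Projectivization.mk K v hv, hx⟩ : Projectivization K (σ → K)) =
        Projectivization.mk K (fun i => eval v (F i)) hFv

variable {P : MvPolynomial σ K} {d e : ℕ} {F : σ → MvPolynomial σ K}
  {f : projHypersurface P → projHypersurface P}

theorem mk_mem_projHypersurface_iff (hP : P.IsHomogeneous d) {v : σ → K} (hv : v ≠ 0) :
    Projectivization.mk K v hv ∈ projHypersurface P ↔ eval v P = 0 := by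
  refine ⟨fun h => h v hv rfl, fun h w hw hvw => ?_⟩
  obtain ⟨a, rfl⟩ := (Projectivization.mk_eq_mk_iff' K w v hw hv).1 hvw.symm
  rw [eval_smul_of_isHomogeneous hP, h, mul_zero]

theorem exists_eq_mk (x : projHypersurface P) :
    ∃ (v : σ → K) (hv : v ≠ 0) (hx : Projectivization.mk K v hv ∈ projHypersurface P),
      x = ⟨Projectivization.mk K v hv, hx⟩ :=
  ⟨x.1.rep, x.1.rep_nonzero, by rw [Projectivization.mk_rep]; exact x.2,
    Subtype.ext x.1.mk_rep.symm⟩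

theorem IsGivenBy.inducesSelfMap (hf : IsGivenBy f F) (hP : P.IsHomogeneous d)
    (hF : ∀ i, (F i).IsHomogeneous e) : InducesSelfMap P F e := by
  refine ⟨hF, fun v hv hvP => ?_, fun v hv hvP => ?_⟩ <;>
    obtain ⟨hFv, hfv⟩ := hf v hv ((mk_mem_projHypersurface_iff hP hv).2 hvP)
  · exact hFv
  · exact (mk_mem_projHypersurface_iff hP hFv).1 (hfv ▸ Subtype.coe_prop _)

theorem IsGivenBy.injective_of_isHomogeneous_zero (hf : IsGivenBy f F)
    (hF : ∀ i, (F i).IsHomogeneous 0) (hsurj : Function.Surjective f) :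
    Function.Injective f := by
  have heval (v w : σ → K) : (fun i => eval v (F i)) = fun i => eval w (F i) := by
    funext i
    rw [totalDegree_eq_zero_iff_eq_C.1 ((totalDegree_zero_iff_isHomogeneous _).2 (hF i)), eval_C,
      eval_C]
  have hconst (x y : projHypersurface P) : f x = f y := by
    obtain ⟨v, hv, hvx, rfl⟩ := exists_eq_mk x
    obtain ⟨w, hw, hwx, rfl⟩ := exists_eq_mk y
    obtain ⟨hFv, hfv⟩ := hf v hv hvx
    obtain ⟨hFw, hfw⟩ := hf w hw hwx
    exact Subtype.ext (by simp only [hfv, hfw, heval v w])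
  exact fun x y _ => hsurj.forall₂.2 (fun x y => hconst x y) x y

theorem IsGivenBy.exists_smul_eval_eq (hf : IsGivenBy f F) (hsurj : Function.Surjective f)
    (hP : P.IsHomogeneous d) {w : σ → K} (hw : w ≠ 0) (hwP : eval w P = 0) :
    ∃ (a : K) (v : σ → K), a • (fun i => eval v (F i)) = w := by
  obtain ⟨x, hx⟩ := hsurj ⟨_, (mk_mem_projHypersurface_iff hP hw).2 hwP⟩
  obtain ⟨v, hv, hvx, rfl⟩ := exists_eq_mk x
  obtain ⟨hFv, hfv⟩ := hf v hv hvx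
  rw [hx] at hfv
  obtain ⟨a, ha⟩ := (Projectivization.mk_eq_mk_iff' K _ _ hw hFv).1 hfv
  exact ⟨a, v, ha⟩

theorem IsGivenBy.injective_of_isUnit_det [Fintype σ] [DecidableEq σ] {M : Matrix σ σ K}
    (hf : IsGivenBy f M.toMvPolynomial) (hM : IsUnit M.det) : Function.Injective f := by
  intro x y hxy
  obtain ⟨v, hv, hvx, rfl⟩ := exists_eq_mk x
  obtain ⟨w, hw, hwx, rfl⟩ := exists_eq_mk y
  obtain ⟨hFv, hfv⟩ := hf v hv hvx
  obtain ⟨hFw, hfw⟩ := hf w hw hwx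
  rw [hxy, hfw] at hfv
  obtain ⟨a, ha⟩ := (Projectivization.mk_eq_mk_iff' K _ _ hFw hFv).1 hfv
  simp only [Matrix.toMvPolynomial_eval_eq_apply, ← Matrix.mulVec_smul] at ha
  have hinj := Matrix.mulVec_injective_iff_isUnit.2 ((Matrix.isUnit_iff_isUnit_det M).2 hM)
  exact Subtype.ext ((Projectivization.mk_eq_mk_iff' K _ _ hw hv).2 ⟨a, hinj ha⟩).symm

theorem IsGivenBy.injective_of_isHomogeneous_one [IsAlgClosed K] [Finite σ]
    (hf : IsGivenBy f F) (hF : ∀ i, (F i).IsHomogeneous 1) (hsurj : Function.Surjective f)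
    (hprime : Prime P) (hP : P.IsHomogeneous d) (hd : 2 ≤ d) : Function.Injective f := by
  classical
  cases nonempty_fintype σ
  obtain ⟨M, rfl⟩ := exists_eq_toMvPolynomial hF
  refine hf.injective_of_isUnit_det (isUnit_det_of_forall_mem_range hprime hP hd fun w hwP => ?_)
  obtain rfl | hw := eq_or_ne w 0
  · exact ⟨0, M.mulVec_zero⟩
  obtain ⟨a, v, rfl⟩ := hf.exists_smul_eval_eq hsurj hP hw hwP
  refine ⟨a • v, ?_⟩
  simp only [Matrix.mulVec_smul, Matrix.toMvPolynomial_eval_eq_apply]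

end Projective

end SmoothHypersurface

open SmoothHypersurface in
theorem stmt_0_general {σ K : Type*} [Field K] [IsAlgClosed K] [CharZero K] [Fintype σ]
    (hσ : 4 ≤ Fintype.card σ) {P : MvPolynomial σ K} {d : ℕ} (hP : P.IsHomogeneous d)
    (hd : 3 ≤ d) (hsm : IsSmoothForm P) {f : projHypersurface P → projHypersurface P}
    {F : σ → MvPolynomial σ K} {e : ℕ} (hF : ∀ i, (F i).IsHomogeneous e) (hf : IsGivenBy f F)
    (hsurj : Function.Surjective f) : Function.Bijective f := by
  refine ⟨?_, hsurj⟩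
  have he : e < 2 := not_le.1 fun he =>
    hsm.not_inducesSelfMap hσ hP hd he (hf.inducesSelfMap hP hF)
  have hprime := hsm.prime (by lia) hP (by lia)
  interval_cases e
  · exact hf.injective_of_isHomogeneous_zero hF hsurj
  · exact hf.injective_of_isHomogeneous_one hF hsurj hprime hP (by lia)

/-- A smooth complex hypersurface `X ⊆ ℙ^{n+1}` of dimension `n ≥ 2` and
degree `d ≥ 3` admits no endomorphism of degree `> 1`: every surjective morphism
`f : X → X` is an isomorphism (in particular bijective). -/
theorem stmt_0 (n d : ℕ) (hn : 2 ≤ n) (hd : 3 ≤ d)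
    (P : MvPolynomial (Fin (n + 1 + 1)) ℂ) (hP : P.IsHomogeneous d) (hP0 : P ≠ 0)
    (hsm : IsSmoothHypersurface P)
    (f : hypersurface P → hypersurface P)
    (hf : IsAlgebraicSelfMap P f) (hsurj : Function.Surjective f) :
    Function.Bijective f := by
  obtain ⟨e, F, hF, hfF⟩ := hf
  exact stmt_0_general (by rw [Fintype.card_fin]; lia) hP hd hsm hF hfF hsurj
end

section
/- For integers n ≥ 1 and d ≥ 3, the rational function ω = (1+x)^{n+2} / (x^{n+1}(1+2x)(1+(2−d)x)) has residues Res_{x=∞} ω = 1/(2(d−2)), Res_{x=−1/2} ω = (−1)^{n+1}/(2d), and Res_{x=1/(d−2)} ω = −(d−1)^{n+2}/(d(d−2)); hence by the residue theorem Res_{x=0} ω = (2(d−1)^{n+2} − d + (−1)^n(d−2)) / (2d(d−2)). -/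
open Filter

/-- The residue of a meromorphic function `f` at the point `a`, defined as the limit as
`r → 0⁺` of `(2πi)⁻¹ ∮_{|z-a|=r} f(z) dz`. -/
noncomputable def residue (f : ℂ → ℂ) (a : ℂ) : ℂ :=
  limUnder (nhdsWithin (0 : ℝ) (Set.Ioi 0))
    (fun r : ℝ => (2 * Real.pi * Complex.I)⁻¹ * circleIntegral f a r)

/-- The residue at `x = ∞` of the meromorphic 1-form `f(x) dx` on the Riemann sphere:
substituting `x = 1/t` it equals the residue at `t = 0` of `-t⁻² f(1/t) dt`. -/
noncomputable def residueAtInf (f : ℂ → ℂ) : ℂ :=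
  residue (fun t => -(f t⁻¹) / t ^ 2) 0

/-- The rational function `ω = (1+x)^{n+2} / (x^{n+1}(1+2x)(1+(2−d)x))`. -/
noncomputable def omegaFun (n d : ℕ) (x : ℂ) : ℂ :=
  (1 + x) ^ (n + 2) / (x ^ (n + 1) * (1 + 2 * x) * (1 + (2 - (d : ℂ)) * x))

/-!
The residue theorem is proved by splitting off principal parts: near a pole `a` of a meromorphic
`f`, subtracting a polynomial `q` in `1 / (z - a)` leaves an analytic function, and the integral of
`q (1 / (z - a))` along any circle around `a` is `2πi` times its linear coefficient. Removing the
poles one at a time reduces to Cauchy's theorem, and the residue at infinity is minus the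
normalized integral over large circles. The poles of `ω` other than `0` are simple, so their
residues are values of analytic functions, and the one at `0` is what remains of the zero total.
-/

open Metric Polynomial
open scoped Topology Real

section PrincipalPart

variable {f g : ℂ → ℂ} {a : ℂ} {q : ℂ[X]}

/-- `f` equals an analytic function plus `q (1 / (z - a))` on a punctured neighbourhood of `a`.
Thus `q` is the principal part of `f` at `a` as a polynomial in `1 / (z - a)`, up to its constant
coefficient, which can be moved into the analytic summand; `q.coeff 1` is the residue. -/
def HasPrincipalPartAt (f : ℂ → ℂ) (q : ℂ[X]) (a : ℂ) : Prop :=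
  ∃ g : ℂ → ℂ, AnalyticAt ℂ g a ∧ f =ᶠ[𝓝[≠] a] fun z => g z + q.eval (z - a)⁻¹

theorem HasPrincipalPartAt.congr (h : HasPrincipalPartAt f q a) (hfg : f =ᶠ[𝓝[≠] a] g) :
    HasPrincipalPartAt g q a :=
  let ⟨k, hk, hf⟩ := h
  ⟨k, hk, hfg.symm.trans hf⟩

theorem HasPrincipalPartAt.sub_analyticAt (h : HasPrincipalPartAt f q a) (hg : AnalyticAt ℂ g a) :
    HasPrincipalPartAt (f - g) q a := by
  obtain ⟨k, hk, hf⟩ := h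
  refine ⟨k - g, hk.sub hg, hf.mono fun z hz => ?_⟩
  simp only [Pi.sub_apply, hz]
  ring

theorem HasPrincipalPartAt.exists_forall_ne_eq_add (h : HasPrincipalPartAt f q a) :
    ∃ g : ℂ → ℂ, AnalyticAt ℂ g a ∧ ∀ z ≠ a, f z = g z + q.eval (z - a)⁻¹ := by
  obtain ⟨k, hk, hf⟩ := h
  let g : ℂ → ℂ := Function.update (fun z => f z - q.eval (z - a)⁻¹) a (k a)
  have hg : ∀ z ≠ a, g z = f z - q.eval (z - a)⁻¹ := fun z hz => Function.update_of_ne hz _ _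
  refine ⟨g, hk.congr ?_, fun z hz => by rw [hg z hz, sub_add_cancel]⟩
  filter_upwards [eventually_nhdsWithin_iff.1 hf] with z hz
  rcases eq_or_ne z a with rfl | hne
  · simp [g]
  · rw [hg z hne, hz hne, add_sub_cancel_right]

theorem analyticAt_dslope_self (hg : AnalyticAt ℂ g a) : AnalyticAt ℂ (dslope g a) a :=
  let ⟨_, hp⟩ := hg
  hp.has_fpower_series_dslope_fslope.analyticAt

theorem hasPrincipalPartAt_div_sub (hg : AnalyticAt ℂ g a) :
    HasPrincipalPartAt (fun z => g z / (z - a)) (monomial 1 (g a)) a := by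
  refine ⟨dslope g a, analyticAt_dslope_self hg, ?_⟩
  filter_upwards [self_mem_nhdsWithin] with z hz
  have hza : z - a ≠ 0 := sub_ne_zero.2 hz
  have hslope : (z - a) * dslope g a z = g z - g a := sub_smul_dslope g a z
  rw [eval_monomial, pow_one]
  field_simp
  linear_combination -hslope

theorem exists_hasPrincipalPartAt_div_sub_pow (hg : AnalyticAt ℂ g a) (n : ℕ) :
    ∃ q, HasPrincipalPartAt (fun z => g z / (z - a) ^ n) q a := by
  induction n generalizing g with
  | zero => exact ⟨0, g, hg, by simp⟩
  | succ n ih =>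
    obtain ⟨q, k, hk, hq⟩ := ih (analyticAt_dslope_self hg)
    refine ⟨q + monomial (n + 1) (g a), k, hk, ?_⟩
    filter_upwards [hq, self_mem_nhdsWithin] with z hz hne
    have hza : z - a ≠ 0 := sub_ne_zero.2 hne
    have hslope : (z - a) * dslope g a z = g z - g a := sub_smul_dslope g a z
    rw [eval_add, eval_monomial, ← add_assoc, ← hz, inv_pow]
    field_simp
    linear_combination -(z - a) ^ n * hslope

theorem exists_hasPrincipalPartAt (hf : MeromorphicAt f a) : ∃ q, HasPrincipalPartAt f q a := by
  obtain ⟨n, hn⟩ := hf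
  obtain ⟨q, hq⟩ := exists_hasPrincipalPartAt_div_sub_pow hn n
  refine ⟨q, hq.congr ?_⟩
  filter_upwards [self_mem_nhdsWithin] with z hz
  exact mul_div_cancel_left₀ _ (pow_ne_zero n (sub_ne_zero.2 hz))

end PrincipalPart

section CircleIntegral

theorem analyticAt_eval_inv_sub (q : ℂ[X]) {a z : ℂ} (hz : z ≠ a) :
    AnalyticAt ℂ (fun z => q.eval (z - a)⁻¹) z :=
  have hinv : AnalyticAt ℂ (fun z => (z - a)⁻¹) z :=
    AnalyticAt.inv (by fun_prop) (sub_ne_zero.2 hz)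
  hinv.aeval_polynomial q

theorem circleIntegrable_eval_inv_sub (q : ℂ[X]) {a c : ℂ} {R : ℝ} (ha : a ∈ ball c R) :
    CircleIntegrable (fun z => q.eval (z - a)⁻¹) c R :=
  ContinuousOn.circleIntegrable (pos_of_mem_ball ha).le fun _ hz =>
    have hza := sphere_disjoint_ball.ne_of_mem hz ha
    (analyticAt_eval_inv_sub q hza).continuousAt.continuousWithinAt

theorem circleIntegral_eval_inv_sub (q : ℂ[X]) {a c : ℂ} {R : ℝ} (ha : a ∈ ball c R) :
    (∮ z in C(c, R), q.eval (z - a)⁻¹) = 2 * π * Complex.I * q.coeff 1 := by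
  induction q using Polynomial.induction_on' with
  | add p q hp hq =>
    simp only [eval_add, coeff_add]
    rw [circleIntegral.integral_add (circleIntegrable_eval_inv_sub p ha)
      (circleIntegrable_eval_inv_sub q ha), hp, hq, mul_add]
  | monomial k v =>
    simp only [eval_monomial, coeff_monomial, circleIntegral.integral_const_mul]
    rcases eq_or_ne k 1 with rfl | hk
    · simp only [pow_one, if_true]
      rw [circleIntegral.integral_sub_inv_of_mem_ball ha, mul_comm]
    · have hzpow : ∀ z : ℂ, (z - a)⁻¹ ^ k = (z - a) ^ (-(k : ℤ)) := fun z => by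
        rw [zpow_neg, zpow_natCast, inv_pow]
      simp only [hzpow, if_neg hk]
      rw [circleIntegral.integral_sub_zpow_of_ne (by omega), mul_zero, mul_zero]

theorem circleIntegral_add_eval_inv_sub {g : ℂ → ℂ} (q : ℂ[X]) {a c : ℂ} {R : ℝ}
    (hg : CircleIntegrable g c R) (ha : a ∈ ball c R) :
    (∮ z in C(c, R), g z + q.eval (z - a)⁻¹) =
      (∮ z in C(c, R), g z) + 2 * π * Complex.I * q.coeff 1 := by
  rw [circleIntegral.integral_add hg (circleIntegrable_eval_inv_sub q ha),
    circleIntegral_eval_inv_sub q ha]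

-- `t ↦ 1 / t` reverses the orientation, which absorbs the sign in `d(1 / t) = -dt / t ^ 2`.
theorem circleIntegral_comp_inv_div_sq (f : ℂ → ℂ) (r : ℝ) :
    (∮ t in C(0, r), f t⁻¹ / t ^ 2) = ∮ z in C(0, r⁻¹), f z := by
  let F : ℝ → ℂ := fun θ => deriv (circleMap 0 r⁻¹) θ • f (circleMap 0 r⁻¹ θ)
  have hF : Function.Periodic F (2 * π) := fun θ => by
    simp only [F, deriv_circleMap, periodic_circleMap _ _ θ]
  have hpull : ∀ θ, deriv (circleMap 0 r) θ • (f (circleMap 0 r θ)⁻¹ / circleMap 0 r θ ^ 2) =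
      F (-θ) := fun θ => by
    simp only [F, deriv_circleMap, ← circleMap_zero_inv, smul_eq_mul]
    rcases eq_or_ne (circleMap 0 r θ) 0 with h | h
    · simp [h]
    · field_simp
  calc (∮ t in C(0, r), f t⁻¹ / t ^ 2) = ∫ θ in 0..2 * π, F (-θ) := by
        simp only [circleIntegral, hpull]
    _ = ∫ θ in -(2 * π)..-(2 * π) + 2 * π, F θ := by
        rw [intervalIntegral.integral_comp_neg, neg_zero, neg_add_cancel]
    _ = ∫ θ in 0..0 + 2 * π, F θ := hF.intervalIntegral_add_eq _ _
    _ = ∮ z in C(0, r⁻¹), f z := by rw [zero_add, circleIntegral]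

end CircleIntegral

section Residue

variable {f g : ℂ → ℂ} {a : ℂ} {q : ℂ[X]}

theorem residue_eq_of_eventually_circleIntegral_eq {v : ℂ}
    (h : ∀ᶠ r in 𝓝[>] (0 : ℝ), (∮ z in C(a, r), f z) = 2 * π * Complex.I * v) :
    residue f a = v := by
  refine (tendsto_const_nhds.congr' (h.mono fun r hr => ?_)).limUnder_eq
  rw [hr, inv_mul_cancel_left₀ Complex.two_pi_I_ne_zero]

theorem HasPrincipalPartAt.residue_eq (h : HasPrincipalPartAt f q a) :
    residue f a = q.coeff 1 := by
  obtain ⟨g, hg, hfg⟩ := h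
  obtain ⟨ε, hε, hball⟩ := Metric.eventually_nhds_iff_ball.1
    (hg.eventually_analyticAt.and (eventually_nhdsWithin_iff.1 hfg))
  refine residue_eq_of_eventually_circleIntegral_eq ?_
  filter_upwards [Ioo_mem_nhdsGT hε] with r ⟨hr, hrε⟩
  have hgr : DifferentiableOn ℂ g (closedBall a r) := fun z hz =>
    (hball z (closedBall_subset_ball hrε hz)).1.differentiableAt.differentiableWithinAt
  calc (∮ z in C(a, r), f z) = ∮ z in C(a, r), g z + q.eval (z - a)⁻¹ :=
        circleIntegral.integral_congr hr.le fun z hz =>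
          (hball z (sphere_subset_closedBall.trans (closedBall_subset_ball hrε) hz)).2
            (ne_of_mem_sphere hz hr.ne')
    _ = (∮ z in C(a, r), g z) + 2 * π * Complex.I * q.coeff 1 :=
        circleIntegral_add_eval_inv_sub q
          ((hgr.continuousOn.mono sphere_subset_closedBall).circleIntegrable hr.le)
          (mem_ball_self hr)
    _ = 2 * π * Complex.I * q.coeff 1 := by
        rw [(hgr.diffContOnCl_ball subset_rfl).circleIntegral_eq_zero hr.le, zero_add]

theorem residue_eq_of_analyticAt_sub (hf : MeromorphicAt f a) (hfg : AnalyticAt ℂ (f - g) a) :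
    residue f a = residue g a := by
  obtain ⟨q, hq⟩ := exists_hasPrincipalPartAt hf
  have hgq : HasPrincipalPartAt g q a := by simpa only [sub_sub_cancel] using hq.sub_analyticAt hfg
  rw [hq.residue_eq, hgq.residue_eq]

theorem residue_eq_of_eventuallyEq_div_sub (hg : AnalyticAt ℂ g a)
    (hf : f =ᶠ[𝓝[≠] a] fun z => g z / (z - a)) : residue f a = g a := by
  simpa using ((hasPrincipalPartAt_div_sub hg).congr hf.symm).residue_eq

theorem residueAtInf_eq_neg_of_eventually_circleIntegral_eq {v : ℂ}
    (h : ∀ᶠ R in atTop, (∮ z in C(0, R), f z) = 2 * π * Complex.I * v) :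
    residueAtInf f = -v := by
  refine residue_eq_of_eventually_circleIntegral_eq ?_
  filter_upwards [tendsto_inv_nhdsGT_zero.eventually h] with r hr
  simp only [neg_div, neg_eq_neg_one_mul (f _ / _)]
  rw [circleIntegral.integral_const_mul, circleIntegral_comp_inv_div_sq, hr]
  ring

theorem circleIntegral_eq_sum_residue {c : ℂ} {R : ℝ} {S : Finset ℂ} (hR : 0 ≤ R)
    (hS : (S : Set ℂ) ⊆ ball c R) (hmer : ∀ a ∈ S, MeromorphicAt f a)
    (hf : AnalyticOnNhd ℂ f (closedBall c R \ S)) :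
    (∮ z in C(c, R), f z) = 2 * π * Complex.I * ∑ a ∈ S, residue f a := by
  induction S using Finset.induction_on generalizing f with
  | empty =>
    have hdiff : DiffContOnCl ℂ f (ball c R) :=
      (hf.differentiableOn.mono (by simp)).diffContOnCl_ball subset_rfl
    rw [hdiff.circleIntegral_eq_zero hR, Finset.sum_empty, mul_zero]
  | insert a S haS ih =>
    rw [Finset.coe_insert, Set.insert_subset_iff] at hS
    obtain ⟨q, hq⟩ := exists_hasPrincipalPartAt (hmer a (S.mem_insert_self a))
    obtain ⟨g, hga, hfg⟩ := hq.exists_forall_ne_eq_add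
    have hsub : ∀ b ≠ a, AnalyticAt ℂ (f - g) b := fun b hb =>
      (analyticAt_eval_inv_sub q hb).congr <| (eventually_ne_nhds hb).mono fun z hz =>
        (sub_eq_of_eq_add' (hfg z hz)).symm
    have hne : ∀ b ∈ S, b ≠ a := fun b hb => ne_of_mem_of_not_mem hb haS
    have hmerf : ∀ b ∈ S, MeromorphicAt f b := fun b hb => hmer b (Finset.mem_insert_of_mem hb)
    have hmerg : ∀ b ∈ S, MeromorphicAt g b := fun b hb => by
      simpa only [sub_sub_cancel] using (hmerf b hb).sub (hsub b (hne b hb)).meromorphicAt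
    have hg : AnalyticOnNhd ℂ g (closedBall c R \ S) := fun z hz => by
      rcases eq_or_ne z a with rfl | hza
      · exact hga
      · have hfz : AnalyticAt ℂ f z := hf z (by simpa [hza] using hz)
        simpa only [sub_sub_cancel] using hfz.sub (hsub z hza)
    have hsphere : sphere c R ⊆ closedBall c R \ S := fun z hz =>
      ⟨sphere_subset_closedBall hz, fun hzS => sphere_disjoint_ball.ne_of_mem hz (hS.2 hzS) rfl⟩
    calc (∮ z in C(c, R), f z) = ∮ z in C(c, R), g z + q.eval (z - a)⁻¹ :=
          circleIntegral.integral_congr hR fun z hz =>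
            hfg z (sphere_disjoint_ball.ne_of_mem hz hS.1)
      _ = (∮ z in C(c, R), g z) + 2 * π * Complex.I * q.coeff 1 :=
          circleIntegral_add_eval_inv_sub q
            ((hg.continuousOn.mono hsphere).circleIntegrable hR) hS.1
      _ = 2 * π * Complex.I * ∑ b ∈ insert a S, residue f b := by
          rw [ih hS.2 hmerg hg, Finset.sum_insert haS, hq.residue_eq, ← mul_add, add_comm,
            Finset.sum_congr rfl fun b hb =>
              residue_eq_of_analyticAt_sub (hmerf b hb) (hsub b (hne b hb))]

theorem sum_residue_add_residueAtInf {S : Finset ℂ} (hmer : ∀ a ∈ S, MeromorphicAt f a)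
    (hf : AnalyticOnNhd ℂ f (S : Set ℂ)ᶜ) :
    ∑ a ∈ S, residue f a + residueAtInf f = 0 := by
  obtain ⟨R₀, hR₀⟩ := S.finite_toSet.isBounded.subset_ball 0
  suffices h : residueAtInf f = -∑ a ∈ S, residue f a by rw [h, add_neg_cancel]
  refine residueAtInf_eq_neg_of_eventually_circleIntegral_eq ?_
  filter_upwards [eventually_ge_atTop R₀, eventually_ge_atTop 0] with R hR hR0
  exact circleIntegral_eq_sum_residue hR0 (hR₀.trans (ball_subset_ball hR)) hmer
    (hf.mono fun z hz => hz.2)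

end Residue

section OmegaParam

variable {n : ℕ} {b c : ℂ}

/-- The function `(1 + x) ^ (n + 2) / (x ^ (n + 1) (1 - b x) (1 - c x))`, which is `ω` for `b = -2`
and `c = d - 2`. It is symmetric in `b` and `c`, so its simple poles `b⁻¹` and `c⁻¹` can be treated
alike. -/
noncomputable def omegaParam (n : ℕ) (b c x : ℂ) : ℂ :=
  (1 + x) ^ (n + 2) / (x ^ (n + 1) * (1 - b * x) * (1 - c * x))

theorem omegaParam_comm (n : ℕ) (b c : ℂ) : omegaParam n b c = omegaParam n c b := by
  ext x
  rw [omegaParam, omegaParam, mul_right_comm]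

theorem meromorphicAt_omegaParam (n : ℕ) (b c a : ℂ) : MeromorphicAt (omegaParam n b c) a := by
  unfold omegaParam
  fun_prop

theorem analyticAt_omegaParam {x : ℂ} (hx : x ≠ 0) (hb : x ≠ b⁻¹) (hc : x ≠ c⁻¹) :
    AnalyticAt ℂ (omegaParam n b c) x := by
  have one_sub_mul_ne_zero : ∀ {e : ℂ}, x ≠ e⁻¹ → 1 - e * x ≠ 0 := fun he h =>
    he (eq_inv_of_mul_eq_one_right (sub_eq_zero.1 h).symm)
  exact AnalyticAt.div (by fun_prop) (by fun_prop) (mul_ne_zero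
    (mul_ne_zero (pow_ne_zero _ hx) (one_sub_mul_ne_zero hb)) (one_sub_mul_ne_zero hc))

theorem residue_omegaParam_inv_left (hb : b ≠ 0) (hbc : b ≠ c) :
    residue (omegaParam n b c) b⁻¹ = -(1 + b) ^ (n + 2) / (b * (b - c)) := by
  have hbc' : b - c ≠ 0 := sub_ne_zero.2 hbc
  have hc : 1 - c * b⁻¹ ≠ 0 := by
    rw [← div_eq_mul_inv, one_sub_div hb]
    exact div_ne_zero hbc' hb
  let g : ℂ → ℂ := fun x => (1 + x) ^ (n + 2) / (x ^ (n + 1) * -b * (1 - c * x))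
  have hg : AnalyticAt ℂ g b⁻¹ := AnalyticAt.div (by fun_prop) (by fun_prop)
    (mul_ne_zero (mul_ne_zero (pow_ne_zero _ (inv_ne_zero hb)) (neg_ne_zero.2 hb)) hc)
  have hfactor : ∀ x, 1 - b * x = -b * (x - b⁻¹) := fun x => by
    field_simp
    ring
  have hω : omegaParam n b c = fun x => g x / (x - b⁻¹) := by
    ext x
    rw [omegaParam, hfactor, div_div]
    ring_nf
  rw [residue_eq_of_eventuallyEq_div_sub hg hω.eventuallyEq]
  simp only [g]
  rw [show 1 + b⁻¹ = (1 + b) / b by field_simp; ring, div_pow, inv_pow]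
  field_simp
  ring

theorem residue_omegaParam_inv_right (hc : c ≠ 0) (hbc : b ≠ c) :
    residue (omegaParam n b c) c⁻¹ = -(1 + c) ^ (n + 2) / (c * (c - b)) := by
  rw [omegaParam_comm, residue_omegaParam_inv_left hc hbc.symm]

theorem residueAtInf_omegaParam (hb : b ≠ 0) (hc : c ≠ 0) :
    residueAtInf (omegaParam n b c) = -1 / (b * c) := by
  let g : ℂ → ℂ := fun t => -(t + 1) ^ (n + 2) / ((t - b) * (t - c))
  have hg : AnalyticAt ℂ g 0 := AnalyticAt.div (by fun_prop) (by fun_prop)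
    (mul_ne_zero (by simpa using hb) (by simpa using hc))
  have hω : (fun t => -omegaParam n b c t⁻¹ / t ^ 2) =ᶠ[𝓝[≠] 0] fun t => g t / (t - 0) := by
    filter_upwards [self_mem_nhdsWithin] with t (ht : t ≠ 0)
    rw [omegaParam, show 1 + t⁻¹ = (t + 1) / t by field_simp,
      show 1 - b * t⁻¹ = (t - b) / t by field_simp,
      show 1 - c * t⁻¹ = (t - c) / t by field_simp, div_pow, inv_pow]
    simp only [g]
    field_simp
    ring
  rw [residueAtInf, residue_eq_of_eventuallyEq_div_sub hg hω]
  simp [g]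

theorem residue_omegaParam_zero (hb : b ≠ 0) (hc : c ≠ 0) (hbc : b ≠ c) :
    residue (omegaParam n b c) 0 =
      (1 + b) ^ (n + 2) / (b * (b - c)) + (1 + c) ^ (n + 2) / (c * (c - b)) + 1 / (b * c) := by
  have hsum : ∑ a ∈ {0, b⁻¹, c⁻¹}, residue (omegaParam n b c) a +
      residueAtInf (omegaParam n b c) = 0 := by
    refine sum_residue_add_residueAtInf (fun a _ => meromorphicAt_omegaParam n b c a) fun x hx => ?_
    simp only [Finset.coe_insert, Finset.coe_singleton, Set.mem_compl_iff, Set.mem_insert_iff,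
      Set.mem_singleton_iff, not_or] at hx
    exact analyticAt_omegaParam hx.1 hx.2.1 hx.2.2
  rw [Finset.sum_insert (by simp [hb.symm, hc.symm]), Finset.sum_pair (inv_injective.ne hbc),
    residue_omegaParam_inv_left hb hbc, residue_omegaParam_inv_right hc hbc,
    residueAtInf_omegaParam hb hc] at hsum
  linear_combination hsum

end OmegaParam

theorem stmt_15_general (n : ℕ) {d : ℂ} (hd₀ : d ≠ 0) (hd₂ : d ≠ 2) :
    let ω : ℂ → ℂ := fun x =>
      (1 + x) ^ (n + 2) / (x ^ (n + 1) * (1 + 2 * x) * (1 + (2 - d) * x))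
    residueAtInf ω = 1 / (2 * (d - 2)) ∧
    residue ω (-(1 / 2)) = (-1) ^ (n + 1) / (2 * d) ∧
    residue ω (1 / (d - 2)) = -(d - 1) ^ (n + 2) / (d * (d - 2)) ∧
    residue ω 0 =
      (2 * (d - 1) ^ (n + 2) - d + (-1) ^ n * (d - 2)) / (2 * d * (d - 2)) := by
  intro ω
  have hω : ω = omegaParam n (-2) (d - 2) := by
    ext x
    simp only [ω, omegaParam]
    ring_nf
  have hd : d - 2 ≠ 0 := sub_ne_zero.2 hd₂
  have h2 : (-2 : ℂ) ≠ 0 := by norm_num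
  have hne : -2 ≠ d - 2 := fun h => hd₀ (by linear_combination -h)
  have hsub : -2 - (d - 2) = -d := by ring
  rw [hω, show (-(1 / 2) : ℂ) = (-2)⁻¹ by norm_num, one_div (d - 2), residueAtInf_omegaParam h2 hd,
    residue_omegaParam_inv_left h2 hne, residue_omegaParam_inv_right hd hne,
    residue_omegaParam_zero h2 hd hne, show (1 : ℂ) + -2 = -1 by norm_num,
    show 1 + (d - 2) = d - 1 by ring, sub_neg_eq_add, sub_add_cancel, hsub]
  refine ⟨?_, ?_, ?_, ?_⟩ <;> field_simp <;> ring

/-- For integers `n ≥ 1` and `d ≥ 3`, the rational function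
`ω = (1+x)^{n+2} / (x^{n+1}(1+2x)(1+(2−d)x))` has residues `Res_∞ ω = 1/(2(d−2))`,
`Res_{−1/2} ω = (−1)^{n+1}/(2d)`, `Res_{1/(d−2)} ω = −(d−1)^{n+2}/(d(d−2))`; hence by the
residue theorem `Res_0 ω = (2(d−1)^{n+2} − d + (−1)^n (d−2)) / (2d(d−2))`. -/
theorem stmt_15 (n d : ℕ) (hn : 1 ≤ n) (hd : 3 ≤ d) :
    residueAtInf (omegaFun n d) = 1 / (2 * ((d : ℂ) - 2)) ∧
    residue (omegaFun n d) (-(1 / 2)) = (-1 : ℂ) ^ (n + 1) / (2 * (d : ℂ)) ∧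
    residue (omegaFun n d) (1 / ((d : ℂ) - 2)) =
      -((d : ℂ) - 1) ^ (n + 2) / ((d : ℂ) * ((d : ℂ) - 2)) ∧
    residue (omegaFun n d) 0 =
      (2 * ((d : ℂ) - 1) ^ (n + 2) - (d : ℂ) + (-1 : ℂ) ^ n * ((d : ℂ) - 2)) /
        (2 * (d : ℂ) * ((d : ℂ) - 2)) :=
  stmt_15_general n (by exact_mod_cast (by omega : d ≠ 0)) (by exact_mod_cast (by omega : d ≠ 2))
end
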